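/- Fix p > 3/2 and M > 0. Let f : [0,T]×ℝ³ → [0,∞) with T ≤ 1 be a smooth solution of the homogeneous Landau–Coulomb equation with f(t,·) Schwartz class for each t, such that for every t: f(t) is normalized and ∫ f(t) log f(t) dv ≤ M. For ℓ ≥ 0 write f_ℓ⁺ = (f − ℓ)₊, and define 𝓔_ℓ(T₂,T₃) = sup_{T₂<t<T₃} ∫ (f_ℓ⁺)^p dv + ∫_{T₂}^{T₃}∫ ⟨v⟩^{−3} |∇((f_ℓ⁺)^{p/2})|² dv dt and 𝓐_k(T₁,T₃) = ∫_{T₁}^{T₃}∫ (f_k⁺)^{p+1} dv dt. Then there is C = C(m,p,M) such that for all 0 ≤ T₁ < T₂ ≤ T₃ ≤ T and all 0 < k < ℓ: 𝓔_ℓ(T₂,T₃) ≤ C [ 1/((T₂−T₁)(ℓ−k)) + 1 + ℓ/(ℓ−k) + ℓ²/(ℓ−k)² ] · 𝓐_k(T₁,T₃). -/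

import Mathlib

open MeasureTheory Real Filter Set

noncomputable section

/-- Velocity space ℝ³. -/
abbrev V3 : Type := EuclideanSpace ℝ (Fin 3)

/-- Japanese bracket ⟨v⟩ = (1+|v|²)^{1/2}. -/
def jap (v : V3) : ℝ := Real.sqrt (1 + ‖v‖ ^ 2)

/-- Partial derivative in the i-th coordinate direction. -/
def pd (i : Fin 3) (g : V3 → ℝ) (v : V3) : ℝ :=
  fderiv ℝ g v (EuclideanSpace.single i 1)

/-- Projection matrix Π(z) = Id − z⊗z/|z|². -/
def projPi (z : V3) (i j : Fin 3) : ℝ :=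
  (if i = j then (1 : ℝ) else 0) - z i * z j / ‖z‖ ^ 2

/-- Landau–Coulomb diffusion matrix A[f]. -/
def coeffA (f : V3 → ℝ) (v : V3) (i j : Fin 3) : ℝ :=
  (8 * π)⁻¹ * ∫ w : V3, projPi (v - w) i j / ‖v - w‖ * f w

/-- Newtonian potential a[f] = (−Δ)⁻¹ f. -/
def coeffa (f : V3 → ℝ) (v : V3) : ℝ :=
  (4 * π)⁻¹ * ∫ w : V3, f w / ‖v - w‖

/-- The homogeneous Landau–Coulomb equation
    ∂_t f = ∇·(A[f]∇f − f ∇a[f]), pointwise at (t,v). -/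
def LandauEqAt (f : ℝ → V3 → ℝ) (t : ℝ) (v : V3) : Prop :=
  deriv (fun s => f s v) t =
    ∑ i : Fin 3, pd i
      (fun w => (∑ j : Fin 3, coeffA (f t) w i j * pd j (f t) w)
        - f t w * pd i (coeffa (f t)) w) v

/-- Normalization: unit mass, zero momentum, energy 3. -/
def IsNormalized (f : V3 → ℝ) : Prop :=
  (∫ v : V3, f v) = 1 ∧ (∀ i : Fin 3, (∫ v : V3, f v * v i) = 0) ∧
    (∫ v : V3, f v * ‖v‖ ^ 2) = 3

/-- Schwartz class function. -/
def IsSchwartz (g : V3 → ℝ) : Prop := ∃ h : SchwartzMap V3 ℝ, ⇑h = g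

/-- Distributional (weak) solution of the Landau–Coulomb equation on (0,T). -/
def IsWeakLandauSolution (T : ℝ) (g : ℝ → V3 → ℝ) : Prop :=
  ∀ φ : ℝ × V3 → ℝ, ContDiff ℝ (⊤ : ℕ∞) φ → HasCompactSupport φ →
    (Function.support φ ⊆ Set.Ioo 0 T ×ˢ (Set.univ : Set V3)) →
    (∫ t in Set.Ioo 0 T, ∫ v : V3, φ (t, v) * deriv (fun s => g s v) t) =
      - ∫ t in Set.Ioo 0 T, ∫ v : V3, ∑ i : Fin 3,
          (fderiv ℝ φ (t, v) (0, EuclideanSpace.single i 1)) *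
          ((∑ j : Fin 3, coeffA (g t) v i j * pd j (g t) v)
            - g t v * pd i (coeffa (g t)) v)

/-- Membership in L^r(0,T;L^p(ℝ³)). -/
def MemLrLp (r p T : ℝ) (g : ℝ → V3 → ℝ) : Prop :=
  (∀ᵐ t ∂(volume.restrict (Set.Ioo 0 T)), Integrable (fun v : V3 => |g t v| ^ p)) ∧
  IntegrableOn (fun t => (∫ v : V3, |g t v| ^ p) ^ (r / p)) (Set.Ioo 0 T)

/-- g ∈ W^{1,∞}(Ω) for every Ω compactly contained in (0,T] × ℝ³,
    i.e. g is Lipschitz on every compact subset of (0,T] × ℝ³. -/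
def LocLipschitz (T : ℝ) (g : ℝ → V3 → ℝ) : Prop :=
  ∀ K : Set (ℝ × V3), IsCompact K → K ⊆ Set.Ioc 0 T ×ˢ (Set.univ : Set V3) →
    ∃ L : NNReal, LipschitzOnWith L (fun q : ℝ × V3 => g q.1 q.2) K


/-- singular kernel used for domination -/
def kap (z : V3) : ℝ := ‖z‖⁻¹ + ‖z‖⁻¹ ^ 2

lemma kap_nonneg (z : V3) : 0 ≤ kap z := by unfold kap; positivity

lemma kap_neg (z : V3) : kap (-z) = kap z := by unfold kap; simp

lemma kap_meas : Measurable kap := by unfold kap; fun_prop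

lemma kap_le_two {z : V3} (hz : 1 ≤ ‖z‖) : kap z ≤ 2 := by
  unfold kap
  have h : ‖z‖⁻¹ ≤ 1 := inv_le_one_of_one_le₀ hz
  have h0 : 0 ≤ ‖z‖⁻¹ := by positivity
  nlinarith

lemma kap_int : IntegrableOn kap (Metric.ball 0 1) := by
  have : kap = fun z : V3 => (fun r : ℝ => r⁻¹ + r⁻¹ ^ 2) ‖z‖ := rfl
  rw [this]
  refine (integrableOn_fun_norm_addHaar (E := V3) volume (f := fun r : ℝ => r⁻¹ + r⁻¹ ^ 2) (r := 1)).2 ?_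
  have h3 : Module.finrank ℝ V3 - 1 = 2 := by simp
  rw [h3]
  have h1 : IntegrableOn (fun y : ℝ => y + 1) (Ioo 0 1) :=
    ((continuous_id.add continuous_const).integrableOn_Icc (a := 0) (b := 1)).mono_set Ioo_subset_Icc_self
  refine h1.congr_fun ?_ measurableSet_Ioo
  intro y hy
  have : y ≠ 0 := hy.1.ne'
  simp only [smul_eq_mul]
  field_simp

/-- localized kernel -/
def kap1 (z : V3) : ℝ := (Metric.ball (0 : V3) 1).indicator kap z

lemma kap1_nonneg (z : V3) : 0 ≤ kap1 z := indicator_nonneg (fun z _ => kap_nonneg z) z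

lemma kap1_meas : Measurable kap1 := kap_meas.indicator measurableSet_ball

lemma kap1_int : Integrable kap1 := (integrable_indicator_iff measurableSet_ball).2 kap_int

lemma kap_le_kap1 (z : V3) : kap z ≤ kap1 z + 2 := by
  by_cases hz : z ∈ Metric.ball (0 : V3) 1
  · simp [kap1, hz]
  · have : 1 ≤ ‖z‖ := by simpa using hz
    have := kap_le_two this
    have := kap1_nonneg z
    linarith

lemma kap_mul_int {E : Type*} [NormedAddCommGroup E] [NormedSpace ℝ E] {h : V3 → E}
    (hi : Integrable h) {C : ℝ} (hC : ∀ v, ‖h v‖ ≤ C) {k : V3 → ℝ} (hk : Measurable k)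
    (hkb : ∀ z, |k z| ≤ kap z) :
    Integrable (fun z => k z • h z) := by
  have hC0 : 0 ≤ C := (norm_nonneg _).trans (hC 0)
  refine Integrable.mono' (g := fun z => C * kap1 z + 2 * ‖h z‖)
    ((kap1_int.const_mul C).add (hi.norm.const_mul 2))
    (hk.aestronglyMeasurable.smul hi.aestronglyMeasurable) (ae_of_all _ fun z => ?_)
  rw [norm_smul, Real.norm_eq_abs]
  have h1 := hkb z
  have h2 := kap_le_kap1 z
  have h3 := hC z
  have h4 := kap1_nonneg z
  calc |k z| * ‖h z‖ ≤ (kap1 z + 2) * ‖h z‖ := by gcongr; linarith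
    _ ≤ _ := by nlinarith

/-- same with shift -/
lemma kap_mul_int' {E : Type*} [NormedAddCommGroup E] [NormedSpace ℝ E] {h : V3 → E}
    (hi : Integrable h) {C : ℝ} (hC : ∀ v, ‖h v‖ ≤ C) {k : V3 → ℝ} (hk : Measurable k)
    (hkb : ∀ z, |k z| ≤ kap z) (v : V3) :
    Integrable (fun z => k z • h (v - z)) :=
  kap_mul_int (hi.comp_sub_left v) (fun z => hC (v - z)) hk hkb

lemma kap_mul_int'' {E : Type*} [NormedAddCommGroup E] [NormedSpace ℝ E] {h : V3 → E}
    (hi : Integrable h) {C : ℝ} (hC : ∀ v, ‖h v‖ ≤ C) {k : V3 → ℝ} (hk : Measurable k)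
    (hkb : ∀ z, |k z| ≤ kap z) (v : V3) :
    Integrable (fun w => k (v - w) • h w) := by
  have := (kap_mul_int' hi hC hk hkb v).comp_sub_left v
  simpa using this

lemma schwartz_bdd {E : Type*} [NormedAddCommGroup E] [NormedSpace ℝ E] (h : SchwartzMap V3 E) :
    ∃ C, 0 ≤ C ∧ ∀ v, ‖h v‖ ≤ C :=
  ⟨_, apply_nonneg _ _, fun v => h.norm_le_seminorm ℝ v⟩

lemma schwartz_decay {E : Type*} [NormedAddCommGroup E] [NormedSpace ℝ E] (h : SchwartzMap V3 E)
    (n : ℕ) : ∃ C, 0 ≤ C ∧ ∀ v, (1 + ‖v‖) ^ n * ‖h v‖ ≤ C := by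
  refine ⟨2 ^ n * ((Finset.Iic (n, 0)).sup fun m => SchwartzMap.seminorm ℝ m.1 m.2) h, by positivity,
    fun v => ?_⟩
  have := SchwartzMap.one_add_le_sup_seminorm_apply (𝕜 := ℝ) (m := (n, 0)) (le_refl n) (le_refl 0) h v
  simpa using this

/-- convolution with a singular kernel -/
def cv {E : Type*} [NormedAddCommGroup E] [NormedSpace ℝ E] (k : V3 → ℝ) (h : V3 → E) (v : V3) : E :=
  ∫ z, k z • h (v - z)

lemma cv_hasFDerivAt {E : Type*} [NormedAddCommGroup E] [NormedSpace ℝ E] (h : SchwartzMap V3 E)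
    {k : V3 → ℝ} (hk : Measurable k) (hkb : ∀ z, |k z| ≤ kap z) (v : V3) :
    HasFDerivAt (cv k h) (cv k (SchwartzMap.fderivCLM ℝ V3 E h) v) v := by
  obtain ⟨C, hC0, hC⟩ := schwartz_decay (SchwartzMap.fderivCLM ℝ V3 E h) 4
  obtain ⟨C', hC0', hC'⟩ := schwartz_bdd h
  obtain ⟨C2, hC02, hC2⟩ := schwartz_bdd (SchwartzMap.fderivCLM ℝ V3 E h)
  have hbi : Integrable (fun z : V3 => (1 + ‖z‖) ^ (-(4 : ℝ))) :=
    integrable_one_add_norm (by simp; norm_num)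
  have hbi2 := kap_mul_int hbi (C := 1) (fun v => by
    rw [Real.norm_eq_abs, abs_of_nonneg (by positivity)]
    apply Real.rpow_le_one_of_one_le_of_nonpos <;> simp) kap_meas
    (fun z => by rw [abs_of_nonneg (kap_nonneg z)])
  refine hasFDerivAt_integral_of_dominated_of_fderiv_le (s := Metric.ball v 1)
    (bound := fun z => (C * (2 + ‖v‖) ^ 4) * (kap z • (1 + ‖z‖) ^ (-(4 : ℝ))))
    (F' := fun v z => k z • SchwartzMap.fderivCLM ℝ V3 E h (v - z))
    (Metric.ball_mem_nhds v one_pos) ?_ ?_ ?_ ?_ ?_ ?_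
  · exact Eventually.of_forall fun x => (kap_mul_int' h.integrable hC' hk hkb x).aestronglyMeasurable
  · exact kap_mul_int' h.integrable hC' hk hkb v
  · exact (kap_mul_int' (SchwartzMap.integrable _) hC2 hk hkb v).aestronglyMeasurable
  · refine ae_of_all _ fun z x hx => ?_
    rw [norm_smul, Real.norm_eq_abs]
    have h1 := hC (x - z)
    have h2 : (1 + ‖z‖) ≤ (2 + ‖v‖) * (1 + ‖x - z‖) := by
      have : ‖z‖ ≤ ‖x - z‖ + ‖x - v‖ + ‖v‖ := by
        calc ‖z‖ = ‖-(x - z) + (x - v) + v‖ := by congr 1; abel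
          _ ≤ ‖-(x - z)‖ + ‖x - v‖ + ‖v‖ := norm_add₃_le
          _ = _ := by rw [norm_neg]
      have h3 : ‖x - v‖ < 1 := by simpa [dist_eq_norm] using hx
      nlinarith [norm_nonneg v, norm_nonneg (x - z)]
    have h4 : (1 + ‖z‖) ^ 4 ≤ (2 + ‖v‖) ^ 4 * (1 + ‖x - z‖) ^ 4 := by
      rw [← mul_pow]; gcongr
    have e : (1 + ‖z‖) ^ (-(4 : ℝ)) = ((1 + ‖z‖) ^ 4)⁻¹ := by
      rw [Real.rpow_neg (by positivity)]; norm_cast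
    have h5 : ‖SchwartzMap.fderivCLM ℝ V3 E h (x - z)‖ ≤ C * (2 + ‖v‖) ^ 4 * ((1 + ‖z‖) ^ 4)⁻¹ := by
      rw [← div_eq_mul_inv, le_div_iff₀ (by positivity)]
      calc _ ≤ ‖SchwartzMap.fderivCLM ℝ V3 E h (x - z)‖ * ((2 + ‖v‖) ^ 4 * (1 + ‖x - z‖) ^ 4) := by gcongr
        _ = ((1 + ‖x - z‖) ^ 4 * ‖SchwartzMap.fderivCLM ℝ V3 E h (x - z)‖) * (2 + ‖v‖) ^ 4 := by ring
        _ ≤ _ := by gcongr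
    rw [e, smul_eq_mul]
    calc _ ≤ kap z * (C * (2 + ‖v‖) ^ 4 * ((1 + ‖z‖) ^ 4)⁻¹) := by
          gcongr
          · exact kap_nonneg z
          · exact hkb z
      _ = _ := by ring
  · exact hbi2.const_mul _
  · refine ae_of_all _ fun z x _ => ?_
    have := (h.hasFDerivAt (x - z)).comp x ((hasFDerivAt_id x).sub_const z)
    exact this.const_smul (k z)

lemma cv_contDiff (n : ℕ) : ∀ {E : Type} [NormedAddCommGroup E] [NormedSpace ℝ E] (h : SchwartzMap V3 E)
    {k : V3 → ℝ} (_ : Measurable k) (_ : ∀ z, |k z| ≤ kap z), ContDiff ℝ n (cv k h) := by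
  induction n with
  | zero =>
    intro E _ _ h k hk hkb
    rw [Nat.cast_zero, contDiff_zero]
    exact continuous_iff_continuousAt.2 fun v => (cv_hasFDerivAt h hk hkb v).continuousAt
  | succ n ih =>
    intro E _ _ h k hk hkb
    rw [Nat.cast_succ, contDiff_succ_iff_hasFDerivAt]
    exact ⟨cv k (SchwartzMap.fderivCLM ℝ V3 E h), ih _ hk hkb, fun v => cv_hasFDerivAt h hk hkb v⟩

/-- partial derivative of Schwartz as Schwartz -/
def spd (i : Fin 3) (h : SchwartzMap V3 ℝ) : SchwartzMap V3 ℝ :=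
  SchwartzMap.evalCLM ℝ V3 ℝ (EuclideanSpace.single i 1) (SchwartzMap.fderivCLM ℝ V3 ℝ h)

lemma spd_eq (i : Fin 3) (h : SchwartzMap V3 ℝ) (v : V3) : spd i h v = pd i h v := rfl

lemma cv_pd (h : SchwartzMap V3 ℝ) {k : V3 → ℝ} (hk : Measurable k) (hkb : ∀ z, |k z| ≤ kap z)
    (i : Fin 3) (v : V3) : pd i (cv k h) v = cv k (spd i h) v := by
  obtain ⟨C2, hC02, hC2⟩ := schwartz_bdd (SchwartzMap.fderivCLM ℝ V3 ℝ h)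
  unfold pd
  rw [(cv_hasFDerivAt h hk hkb v).fderiv]
  unfold cv
  rw [ContinuousLinearMap.integral_apply (kap_mul_int' (SchwartzMap.integrable _) hC2 hk hkb v)]
  rfl

lemma cv_eq {E : Type*} [NormedAddCommGroup E] [NormedSpace ℝ E] (k : V3 → ℝ) (h : V3 → E) (v : V3) :
    cv k h v = ∫ w, k (v - w) • h w := by
  unfold cv
  rw [← integral_sub_left_eq_self _ volume v]
  simp


def k1 (z : V3) : ℝ := ‖z‖⁻¹
def k2 (i : Fin 3) (z : V3) : ℝ := z i * ‖z‖⁻¹ ^ 3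

lemma k1_meas : Measurable k1 := by unfold k1; fun_prop
lemma k2_meas (i : Fin 3) : Measurable (k2 i) := by unfold k2; fun_prop
lemma k1_le (z : V3) : |k1 z| ≤ kap z := by
  unfold k1 kap
  rw [abs_of_nonneg (by positivity)]
  have : 0 ≤ ‖z‖⁻¹ ^ 2 := by positivity
  linarith

lemma coord_le (z : V3) (i : Fin 3) : |z i| ≤ ‖z‖ := by
  simpa using PiLp.norm_apply_le z i

lemma k2_le' (i : Fin 3) (z : V3) : |k2 i z| ≤ ‖z‖⁻¹ ^ 2 := by
  unfold k2
  rw [abs_mul, abs_of_nonneg (a := ‖z‖⁻¹ ^ 3) (by positivity)]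
  rcases eq_or_ne z 0 with h | h
  · simp [h]
  · have : ‖z‖ ≠ 0 := by simpa using h
    calc |z i| * ‖z‖⁻¹ ^ 3 ≤ ‖z‖ * ‖z‖⁻¹ ^ 3 := by gcongr; exact coord_le z i
      _ = _ := by field_simp

lemma k2_le (i : Fin 3) (z : V3) : |k2 i z| ≤ kap z := by
  refine (k2_le' i z).trans ?_
  unfold kap
  have : 0 ≤ ‖z‖⁻¹ := by positivity
  linarith

/-- regularised kernel -/
def rk (ε : ℝ) (z : V3) : ℝ := (√(‖z‖ ^ 2 + ε))⁻¹

lemma rk_fderiv {ε : ℝ} (hε : 0 < ε) (z : V3) :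
    HasFDerivAt (rk ε) ((-((√(‖z‖ ^ 2 + ε))⁻¹ ^ 3)) • (innerSL ℝ z)) z := by
  have h1 : HasFDerivAt (fun z : V3 => ‖z‖ ^ 2) (2 • (innerSL ℝ z)) z :=
    (hasStrictFDerivAt_norm_sq z).hasFDerivAt
  have hpos : 0 < ‖z‖ ^ 2 + ε := by positivity
  have h2 : HasDerivAt (fun x : ℝ => (√(x + ε))⁻¹) (-(1 / (2 * √(‖z‖ ^ 2 + ε))) / (√(‖z‖ ^ 2 + ε)) ^ 2) (‖z‖ ^ 2) := by
    have := ((hasDerivAt_id (‖z‖ ^ 2)).add_const ε).sqrt hpos.ne'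
    exact this.inv (by positivity)
  have h3 := h2.comp_hasFDerivAt z h1
  refine h3.congr_fderiv ?_
  ext y
  simp only [smul_apply, smul_eq_mul, nsmul_eq_mul]
  have : √(‖z‖ ^ 2 + ε) ≠ 0 := by positivity
  simp
  field_simp

lemma rk_pd {ε : ℝ} (hε : 0 < ε) (i : Fin 3) (z : V3) :
    fderiv ℝ (rk ε) z (EuclideanSpace.single i 1) = - (z i * (√(‖z‖ ^ 2 + ε))⁻¹ ^ 3) := by
  rw [(rk_fderiv hε z).fderiv]
  have : inner ℝ z (EuclideanSpace.single i (1 : ℝ)) = z i := by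
    rw [EuclideanSpace.inner_single_right]; simp
  simp [mul_comm, this]

lemma rk_le {ε : ℝ} (hε : 0 < ε) {z : V3} (hz : z ≠ 0) : (√(‖z‖ ^ 2 + ε))⁻¹ ≤ ‖z‖⁻¹ := by
  have : 0 < ‖z‖ := by simpa using hz
  gcongr
  exact Real.le_sqrt_of_sq_le (by linarith)

lemma ae_ne_zero : ∀ᵐ z : V3, z ≠ 0 := by
  simp [ae_iff]

lemma cv_ibp (h : SchwartzMap V3 ℝ) (i : Fin 3) (v : V3) :
    cv k1 (spd i h) v = - cv (k2 i) h v := by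
  obtain ⟨C, -, hC⟩ := schwartz_bdd h
  obtain ⟨C2, -, hC2⟩ := schwartz_bdd (spd i h)
  set ε : ℕ → ℝ := fun n => 1 / ((n : ℝ) + 1) with hεd
  have hε : ∀ n, 0 < ε n := fun n => by simp only [hεd]; positivity
  have hε0 : Tendsto ε atTop (nhds 0) := tendsto_one_div_add_atTop_nhds_zero_nat
  have I1 := (kap_mul_int' (SchwartzMap.integrable _) hC2 k1_meas k1_le v)
  have I2 := (kap_mul_int' (SchwartzMap.integrable _) hC (k2_meas i) (k2_le i) v)
  have I0 := (kap_mul_int' (SchwartzMap.integrable _) hC k1_meas k1_le v)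
  have hsq : ∀ n (z : V3), 0 ≤ (√(‖z‖ ^ 2 + ε n))⁻¹ := fun n z => by positivity
  have Irk : Continuous (spd i h) := (spd i h).continuous
  have hh : Continuous h := h.continuous
  have rkm : ∀ n, Measurable (fun z : V3 => (√(‖z‖ ^ 2 + ε n))⁻¹) := fun n => by fun_prop
  have b1 : ∀ n, ∀ᵐ z : V3, ‖(√(‖z‖ ^ 2 + ε n))⁻¹ * spd i h (v - z)‖ ≤ ‖k1 z • spd i h (v - z)‖ := by
    intro n
    filter_upwards [ae_ne_zero] with z hz
    rw [norm_mul, norm_smul]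
    gcongr
    rw [Real.norm_of_nonneg (hsq n z)]
    unfold k1; rw [Real.norm_of_nonneg (by positivity)]
    exact rk_le (hε n) hz
  have b0 : ∀ n, ∀ᵐ z : V3, ‖(√(‖z‖ ^ 2 + ε n))⁻¹ * h (v - z)‖ ≤ ‖k1 z • h (v - z)‖ := by
    intro n
    filter_upwards [ae_ne_zero] with z hz
    rw [norm_mul, norm_smul]
    gcongr
    rw [Real.norm_of_nonneg (hsq n z)]
    unfold k1; rw [Real.norm_of_nonneg (by positivity)]
    exact rk_le (hε n) hz
  have b2 : ∀ n, ∀ᵐ z : V3, ‖(z i * (√(‖z‖ ^ 2 + ε n))⁻¹ ^ 3) * h (v - z)‖ ≤ ‖k2 i z • h (v - z)‖ := by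
    intro n
    filter_upwards [ae_ne_zero] with z hz
    rw [norm_mul, norm_smul]
    gcongr
    unfold k2
    rw [norm_mul, norm_mul]
    gcongr
    rw [Real.norm_of_nonneg (pow_nonneg (hsq n z) 3), Real.norm_of_nonneg (by positivity)]
    refine pow_le_pow_left₀ (hsq n z) ?_ 3
    exact rk_le (hε n) hz
  have m1 : ∀ n, AEStronglyMeasurable (fun z : V3 => (√(‖z‖ ^ 2 + ε n))⁻¹ * spd i h (v - z)) volume :=
    fun n => by have := rkm n; fun_prop
  have m0 : ∀ n, AEStronglyMeasurable (fun z : V3 => (√(‖z‖ ^ 2 + ε n))⁻¹ * h (v - z)) volume :=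
    fun n => by have := rkm n; fun_prop
  have m2 : ∀ n, AEStronglyMeasurable (fun z : V3 => (z i * (√(‖z‖ ^ 2 + ε n))⁻¹ ^ 3) * h (v - z)) volume :=
    fun n => by have := rkm n; fun_prop
  have hder : ∀ z : V3, HasFDerivAt (fun z : V3 => h (v - z)) (-(fderiv ℝ h (v - z))) z := by
    intro z
    have h1 := (h.hasFDerivAt (v - z)).comp z ((hasFDerivAt_id z).const_sub v)
    refine h1.congr_fderiv ?_
    ext y; simp
  have key : ∀ n, ∫ z, (√(‖z‖ ^ 2 + ε n))⁻¹ * spd i h (v - z) =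
      - ∫ z : V3, (z i * (√(‖z‖ ^ 2 + ε n))⁻¹ ^ 3) * h (v - z) := by
    intro n
    have J1 : Integrable (fun z : V3 => (√(‖z‖ ^ 2 + ε n))⁻¹ * spd i h (v - z)) :=
      I1.norm.mono' (m1 n) (b1 n)
    have J0 : Integrable (fun z : V3 => (√(‖z‖ ^ 2 + ε n))⁻¹ * h (v - z)) :=
      I0.norm.mono' (m0 n) (b0 n)
    have J2 : Integrable (fun z : V3 => (z i * (√(‖z‖ ^ 2 + ε n))⁻¹ ^ 3) * h (v - z)) :=
      I2.norm.mono' (m2 n) (b2 n)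
    have e1 : ∀ z : V3, rk (ε n) z * fderiv ℝ (fun z : V3 => h (v - z)) z (EuclideanSpace.single i 1)
        = - ((√(‖z‖ ^ 2 + ε n))⁻¹ * spd i h (v - z)) := by
      intro z; rw [(hder z).fderiv, spd_eq]; unfold rk pd; simp
    have e2 : ∀ z : V3, fderiv ℝ (rk (ε n)) z (EuclideanSpace.single i 1) * h (v - z)
        = - ((z i * (√(‖z‖ ^ 2 + ε n))⁻¹ ^ 3) * h (v - z)) := by
      intro z; rw [rk_pd (hε n)]; ring
    have := integral_mul_fderiv_eq_neg_fderiv_mul_of_integrable (μ := (volume : Measure V3))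
      (f := rk (ε n)) (g := fun z : V3 => h (v - z)) (v := EuclideanSpace.single i 1)
      (by simp_rw [e2]; exact J2.neg) (by simp_rw [e1]; exact J1.neg) J0
      (fun z _ => (rk_fderiv (hε n) z).differentiableAt) (fun z _ => (hder z).differentiableAt)
    simp_rw [e1, e2] at this
    rw [integral_neg, integral_neg] at this
    linarith
  have tsq : ∀ z : V3, z ≠ 0 → Tendsto (fun n => (√(‖z‖ ^ 2 + ε n))⁻¹) atTop (nhds ‖z‖⁻¹) := by
    intro z hz
    have hz' : ‖z‖ ≠ 0 := by simpa using hz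
    have : Tendsto (fun n => √(‖z‖ ^ 2 + ε n)) atTop (nhds √(‖z‖ ^ 2 + 0)) :=
      (Real.continuous_sqrt.tendsto _).comp (tendsto_const_nhds.add hε0)
    rw [add_zero, Real.sqrt_sq (norm_nonneg z)] at this
    exact this.inv₀ hz'
  have t1 : Tendsto (fun n => ∫ z, (√(‖z‖ ^ 2 + ε n))⁻¹ * spd i h (v - z)) atTop
      (nhds (cv k1 (spd i h) v)) := by
    refine tendsto_integral_of_dominated_convergence _ m1 I1.norm b1 ?_
    filter_upwards [ae_ne_zero] with z hz
    exact (tsq z hz).mul_const _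
  have t2 : Tendsto (fun n => - ∫ z : V3, (z i * (√(‖z‖ ^ 2 + ε n))⁻¹ ^ 3) * h (v - z)) atTop
      (nhds (- cv (k2 i) h v)) := by
    refine (tendsto_integral_of_dominated_convergence _ m2 I2.norm b2 ?_).neg
    filter_upwards [ae_ne_zero] with z hz
    exact (((tsq z hz).pow 3).const_mul _).mul_const _
  simp_rw [key] at t1
  exact tendsto_nhds_unique t1 t2

lemma polar_formula (Ψ : V3 → ℝ) (hΨ : ContDiff ℝ 1 Ψ) (hc : HasCompactSupport Ψ) (w : V3) :
    ∫ z : V3, ‖z‖⁻¹ ^ 3 * fderiv ℝ Ψ (w + z) z = - (4 * π) * Ψ w := by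
  have hcont : Continuous (fderiv ℝ Ψ) := hΨ.continuous_fderiv (by norm_num)
  have hcs : HasCompactSupport (fderiv ℝ Ψ) := hc.fderiv ℝ
  have hcs' : HasCompactSupport (fun z => fderiv ℝ Ψ (w + z)) :=
    hcs.comp_homeomorph (Homeomorph.addLeft w)
  have hint : Integrable (fun z : V3 => ‖z‖⁻¹ ^ 3 * fderiv ℝ Ψ (w + z) z) := by
    have hD : Integrable (fun z : V3 => ‖fderiv ℝ Ψ (w + z)‖) :=
      (Continuous.integrable_of_hasCompactSupport (by fun_prop) hcs').norm
    obtain ⟨C, hC⟩ := hcs.exists_bound_of_continuous hcont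
    have := kap_mul_int hD (C := C) (fun v => by simpa using hC _) kap_meas
      (fun z => by rw [abs_of_nonneg (kap_nonneg z)])
    refine this.mono' ?_ (ae_of_all _ fun z => ?_)
    · apply Measurable.aestronglyMeasurable
      have : Continuous (fun z : V3 => fderiv ℝ Ψ (w + z) z) := by fun_prop
      have := this.measurable
      fun_prop
    · rw [norm_mul, Real.norm_of_nonneg (by positivity), smul_eq_mul]
      rcases eq_or_ne z 0 with h | h
      · subst h; simp [kap]
      have hz : ‖z‖ ≠ 0 := by simpa using h
      calc _ ≤ ‖z‖⁻¹ ^ 3 * (‖fderiv ℝ Ψ (w + z)‖ * ‖z‖) := by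
            gcongr; exact ContinuousLinearMap.le_opNorm _ _
        _ = ‖z‖⁻¹ ^ 2 * ‖fderiv ℝ Ψ (w + z)‖ := by field_simp
        _ ≤ _ := by
            gcongr; unfold kap
            have : 0 ≤ ‖z‖⁻¹ := by positivity
            linarith
  set F : V3 → ℝ := fun z : V3 => ‖z‖⁻¹ ^ 3 * fderiv ℝ Ψ (w + z) z with hF
  have h3 : Module.finrank ℝ V3 - 1 = 2 := by simp
  have mp := (volume : Measure V3).measurePreserving_homeomorphUnitSphereProd
  rw [h3] at mp
  set P : (Metric.sphere (0 : V3) 1) × (Ioi (0 : ℝ)) → ℝ := fun x => F (x.2.1 • x.1.1) with hP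
  have hcomp : ∀ x : ({(0 : V3)}ᶜ : Set V3), P (homeomorphUnitSphereProd V3 x) = F x.1 := by
    intro x
    have hx : (x : V3) ≠ 0 := x.2
    have hx' : ‖(x : V3)‖ ≠ 0 := by simpa using hx
    simp [hP, homeomorphUnitSphereProd, smul_smul, hx']
  have s1 : ∫ z : V3, F z = ∫ x : ({(0 : V3)}ᶜ : Set V3), F x.1 ∂(volume.comap Subtype.val) := by
    rw [integral_subtype_comap (measurableSet_singleton _).compl F, restrict_compl_singleton]
  have s2 : ∫ x : ({(0 : V3)}ᶜ : Set V3), F x.1 ∂(volume.comap Subtype.val) =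
      ∫ x, P x ∂((volume : Measure V3).toSphere.prod (.volumeIoiPow 2)) := by
    rw [← mp.integral_comp (Homeomorph.measurableEmbedding _)]
    simp_rw [hcomp]
  have hPint : Integrable P ((volume : Measure V3).toSphere.prod (.volumeIoiPow 2)) := by
    rw [← mp.integrable_comp_emb (Homeomorph.measurableEmbedding _)]
    have : P ∘ (homeomorphUnitSphereProd V3) = F ∘ (Subtype.val : ({(0 : V3)}ᶜ : Set V3) → V3) := by
      funext x; exact hcomp x
    rw [this, ← integrableOn_iff_comap_subtypeVal (measurableSet_singleton _).compl]
    exact hint.integrableOn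
  rw [s1, s2, integral_prod _ hPint]
  have inner : ∀ σ : Metric.sphere (0 : V3) 1,
      ∫ r : Ioi (0 : ℝ), P (σ, r) ∂(.volumeIoiPow 2) = - Ψ w := by
    intro σ
    have hσ : ‖(σ : V3)‖ = 1 := by simp
    have e1 : ∫ r : Ioi (0 : ℝ), P (σ, r) ∂(.volumeIoiPow 2) =
        ∫ r in Ioi (0 : ℝ), fderiv ℝ Ψ (w + r • (σ : V3)) σ := by
      simp only [Measure.volumeIoiPow, ENNReal.ofReal]
      rw [integral_withDensity_eq_integral_smul,
        integral_subtype_comap measurableSet_Ioi fun a ↦ Real.toNNReal (a ^ 2) • F (a • (σ : V3)),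
        setIntegral_congr_fun measurableSet_Ioi fun x hx ↦ ?_]
      · have hx : 0 < x := hx
        rw [NNReal.smul_def, Real.coe_toNNReal _ (by positivity)]
        simp only [hF, norm_smul, hσ, Real.norm_of_nonneg hx.le, map_smul, smul_eq_mul]
        field_simp
      · exact (measurable_subtype_coe.pow_const _).real_toNNReal
    rw [e1]
    have hd : ∀ r : ℝ, HasDerivAt (fun r : ℝ => Ψ (w + r • (σ : V3))) (fderiv ℝ Ψ (w + r • (σ : V3)) σ) r := by
      intro r
      have h1 : HasDerivAt (fun r : ℝ => w + r • (σ : V3)) (σ : V3) r := by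
        simpa using ((hasDerivAt_id r).smul_const (σ : V3)).const_add w
      exact ((hΨ.differentiable (by norm_num)) _).hasFDerivAt.comp_hasDerivAt r h1
    have hemb : Topology.IsClosedEmbedding (fun r : ℝ => w + r • (σ : V3)) := by
      have : Isometry (fun r : ℝ => w + r • (σ : V3)) := by
        refine Isometry.of_dist_eq fun a b => ?_
        rw [dist_add_left, dist_eq_norm, ← sub_smul, norm_smul, hσ, mul_one, dist_eq_norm]
      exact this.isClosedEmbedding
    have c1 : HasCompactSupport (fun r : ℝ => Ψ (w + r • (σ : V3))) := hc.comp_isClosedEmbedding hemb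
    have c2 : HasCompactSupport (fun r : ℝ => fderiv ℝ Ψ (w + r • (σ : V3)) σ) := by
      have := hcs.comp_isClosedEmbedding hemb
      exact this.comp_left (g := fun L : V3 →L[ℝ] ℝ => L σ) (by simp)
    have i2 : Integrable (fun r : ℝ => fderiv ℝ Ψ (w + r • (σ : V3)) σ) :=
      Continuous.integrable_of_hasCompactSupport (by fun_prop) c2
    have ht : Tendsto (fun r : ℝ => Ψ (w + r • (σ : V3))) atTop (nhds 0) := by
      have := c1.is_zero_at_infty
      exact this.mono_left atTop_le_cocompact
    rw [integral_Ioi_of_hasDerivAt_of_tendsto' (fun r _ => hd r) i2.integrableOn ht]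
    simp
  simp_rw [inner]
  rw [integral_const, Measure.toSphere_real_apply_univ]
  have : (volume : Measure V3).real (Metric.ball 0 1) = π * 4 / 3 := by
    rw [measureReal_def, EuclideanSpace.volume_ball_fin_three]
    simp; positivity
  have h4 : Module.finrank ℝ V3 = 3 := by simp
  rw [this, h4, smul_eq_mul]; push_cast; ring

lemma coeffa_eq (g : V3 → ℝ) : coeffa g = fun v => (4 * π)⁻¹ * cv k1 g v := by
  funext v
  unfold coeffa
  rw [cv_eq]
  congr 2
  funext w
  unfold k1; rw [smul_eq_mul]; ring

lemma coeffa_contDiff (h : SchwartzMap V3 ℝ) : ContDiff ℝ 2 (coeffa h) := by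
  rw [coeffa_eq]
  exact contDiff_const.mul (by exact_mod_cast cv_contDiff 2 h k1_meas k1_le)

lemma pd_coeffa (h : SchwartzMap V3 ℝ) (i : Fin 3) (v : V3) :
    pd i (coeffa h) v = - ((4 * π)⁻¹ * cv (k2 i) h v) := by
  have h1 : pd i (coeffa h) v = (4 * π)⁻¹ * pd i (cv k1 h) v := by
    rw [coeffa_eq]
    unfold pd
    rw [fderiv_const_mul (cv_hasFDerivAt h k1_meas k1_le v).differentiableAt]
    simp
  rw [h1, cv_pd h k1_meas k1_le, cv_ibp]
  ring

lemma pd_continuous {Ψ : V3 → ℝ} (hΨ : ContDiff ℝ 1 Ψ) (i : Fin 3) : Continuous (pd i Ψ) := by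
  have hcont : Continuous (fderiv ℝ Ψ) := hΨ.continuous_fderiv (by norm_num)
  unfold pd; fun_prop

lemma pd_hcs {Ψ : V3 → ℝ} (hc : HasCompactSupport Ψ) (i : Fin 3) : HasCompactSupport (pd i Ψ) :=
  (hc.fderiv ℝ).comp_left (g := fun L : V3 →L[ℝ] ℝ => L (EuclideanSpace.single i 1)) (by simp)

lemma fderiv_eq_sum (Ψ : V3 → ℝ) (v z : V3) : fderiv ℝ Ψ v z = ∑ i, z i * pd i Ψ v := by
  have hz : z = ∑ i, z i • EuclideanSpace.single i (1 : ℝ) := by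
    ext j; simp [Finset.sum_apply, Pi.single_apply]
  conv_lhs => rw [hz]
  simp [pd]

lemma cv_bdd (h : SchwartzMap V3 ℝ) : ∃ C, ∀ v, ∫ w, kap (v - w) * |h w| ≤ C := by
  obtain ⟨C, hC0, hC⟩ := schwartz_bdd h
  refine ⟨C * (∫ z, kap1 z) + 2 * ∫ w, |h w|, fun v => ?_⟩
  have i1 : Integrable (fun w : V3 => C * kap1 (v - w)) := (kap1_int.comp_sub_left v).const_mul C
  have i2 : Integrable (fun w : V3 => 2 * |h w|) := h.integrable.norm.const_mul 2
  calc ∫ w, kap (v - w) * |h w| ≤ ∫ w, (C * kap1 (v - w) + 2 * |h w|) := by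
        refine integral_mono_of_nonneg (ae_of_all _ fun w => ?_) (i1.add i2) (ae_of_all _ fun w => ?_)
        · exact mul_nonneg (kap_nonneg _) (abs_nonneg _)
        · have h1 := kap_le_kap1 (v - w)
          have h2 := kap1_nonneg (v - w)
          have h3 : |h w| ≤ C := hC w
          have h4 := abs_nonneg (h w)
          simp only
          nlinarith
    _ = _ := by
        rw [integral_add i1 i2, integral_const_mul, integral_const_mul,
          integral_sub_left_eq_self (fun z => kap1 z) volume v]

lemma gauss_weak (h : SchwartzMap V3 ℝ) (Ψ : V3 → ℝ) (hΨ : ContDiff ℝ 1 Ψ) (hc : HasCompactSupport Ψ) :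
    ∫ v, ∑ i, pd i (coeffa h) v * pd i Ψ v = ∫ v, h v * Ψ v := by
  obtain ⟨C, hC0, hC⟩ := schwartz_bdd h
  obtain ⟨N, hN⟩ := cv_bdd h
  set Q : V3 → V3 → ℝ := fun v w => ∑ i, (k2 i (v - w) * h w) * pd i Ψ v with hQ
  have e1 : ∀ v, ∑ i, pd i (coeffa h) v * pd i Ψ v = - (4 * π)⁻¹ * ∫ w, Q v w := by
    intro v
    simp only [hQ]
    rw [integral_finsetSum]
    · rw [Finset.mul_sum]
      refine Finset.sum_congr rfl fun i _ => ?_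
      rw [pd_coeffa, integral_mul_const, cv_eq]
      simp only [smul_eq_mul]; ring
    · intro i _
      exact (kap_mul_int'' h.integrable hC (k2_meas i) (k2_le i) v).mul_const _
  have hQm : AEStronglyMeasurable (Function.uncurry Q) ((volume : Measure V3).prod volume) := by
    have m1 : ∀ i, Measurable (pd i Ψ) := fun i => (pd_continuous hΨ i).measurable
    have m2 := k2_meas
    have m3 : Measurable h := h.continuous.measurable
    apply Measurable.aestronglyMeasurable
    simp only [hQ]
    unfold Function.uncurry
    refine Finset.measurable_fun_sum _ fun i _ => ?_
    exact (((m2 i).comp (measurable_fst.sub measurable_snd)).mul (m3.comp measurable_snd)).mul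
      ((m1 i).comp measurable_fst)
  have i3 : ∀ v, Integrable (fun w => kap (v - w) * |h w|) := fun v =>
    kap_mul_int'' h.integrable.norm (C := C) (fun v => by simpa using hC v) kap_meas
      (fun z => by rw [abs_of_nonneg (kap_nonneg z)]) v
  have hQb : ∀ v w, ‖Q v w‖ ≤ (kap (v - w) * |h w|) * ∑ i, |pd i Ψ v| := by
    intro v w
    simp only [hQ]
    refine (norm_sum_le _ _).trans ?_
    rw [Finset.mul_sum]
    refine Finset.sum_le_sum fun i _ => ?_
    rw [norm_mul, norm_mul]
    simp only [Real.norm_eq_abs]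
    gcongr
    exact k2_le i _
  have hQint : Integrable (Function.uncurry Q) ((volume : Measure V3).prod volume) := by
    rw [integrable_prod_iff hQm]
    constructor
    · refine ae_of_all _ fun v => ?_
      refine ((i3 v).mul_const (∑ i, |pd i Ψ v|)).mono' ?_ (ae_of_all _ fun w => hQb v w)
      simp only [Function.uncurry, hQ]
      have m3 : Measurable h := h.continuous.measurable
      apply Measurable.aestronglyMeasurable
      refine Finset.measurable_fun_sum _ fun i _ => ?_
      exact (((k2_meas i).comp (measurable_const.sub measurable_id)).mul m3).mul_const _
    · have hb : Integrable (fun v => N * ∑ i, |pd i Ψ v|) := by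
        refine Integrable.const_mul ?_ N
        refine integrable_finsetSum _ fun i _ => ?_
        exact ((pd_continuous hΨ i).integrable_of_hasCompactSupport (pd_hcs hc i)).norm
      refine hb.mono' hQm.norm.integral_prod_right' (ae_of_all _ fun v => ?_)
      rw [Real.norm_of_nonneg (integral_nonneg fun w => norm_nonneg _)]
      calc ∫ w, ‖Q v w‖ ≤ ∫ w, (kap (v - w) * |h w|) * ∑ i, |pd i Ψ v| :=
            integral_mono_of_nonneg (ae_of_all _ fun w => norm_nonneg _) ((i3 v).mul_const _)
              (ae_of_all _ fun w => hQb v w)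
        _ ≤ _ := by
            rw [integral_mul_const]
            gcongr
            exact hN v
  simp_rw [e1]
  rw [integral_const_mul, integral_integral_swap hQint]
  have e2 : ∀ w, ∫ v, Q v w = h w * (- (4 * π) * Ψ w) := by
    intro w
    rw [← polar_formula Ψ hΨ hc w, ← integral_const_mul,
      ← integral_sub_right_eq_self (fun z => h w * (‖z‖⁻¹ ^ 3 * fderiv ℝ Ψ (w + z) z)) w]
    congr 1
    funext v
    simp only [hQ]
    rw [fderiv_eq_sum, Finset.mul_sum, Finset.mul_sum]
    refine Finset.sum_congr rfl fun i _ => ?_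
    unfold k2
    rw [add_sub_cancel]
    ring
  simp_rw [e2]
  rw [← integral_const_mul]
  congr 1
  funext w
  field_simp


def kA (i j : Fin 3) (z : V3) : ℝ := projPi z i j * ‖z‖⁻¹

lemma kA_meas (i j : Fin 3) : Measurable (kA i j) := by
  unfold kA projPi; fun_prop

lemma projPi_le (z : V3) (i j : Fin 3) : |projPi z i j| ≤ 1 := by
  unfold projPi
  rcases eq_or_ne z 0 with h | h
  · subst h; simp; split_ifs <;> simp
  have hz : 0 < ‖z‖ := by simpa using h
  have hi := coord_le z i
  have hj := coord_le z j
  by_cases hij : i = j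
  · subst hij
    have h1 : z i * z i ≤ ‖z‖ ^ 2 := by
      nlinarith [abs_mul_abs_self (z i), abs_nonneg (z i)]
    have h2 : z i * z i / ‖z‖ ^ 2 ≤ 1 := by rw [div_le_one (by positivity)]; exact h1
    have h3 : 0 ≤ z i * z i / ‖z‖ ^ 2 := by
      apply div_nonneg (mul_self_nonneg _); positivity
    rw [abs_le]; simp only [if_true]; constructor <;> linarith
  · simp only [hij, if_false, zero_sub, abs_neg, abs_div, abs_mul]
    rw [abs_of_nonneg (a := ‖z‖ ^ 2) (by positivity), div_le_one (by positivity), sq]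
    gcongr

lemma kA_le (i j : Fin 3) (z : V3) : |kA i j z| ≤ kap z := by
  refine le_trans ?_ (k1_le z)
  unfold kA k1
  rw [abs_mul]
  have := projPi_le z i j
  have := abs_nonneg (‖z‖⁻¹)
  nlinarith

lemma coeffA_eq (g : V3 → ℝ) (i j : Fin 3) (v : V3) : coeffA g v i j = (8 * π)⁻¹ * cv (kA i j) g v := by
  unfold coeffA
  rw [cv_eq]
  congr 1

lemma coeffA_contDiff (h : SchwartzMap V3 ℝ) (i j : Fin 3) : ContDiff ℝ 1 (fun v => coeffA h v i j) := by
  simp_rw [coeffA_eq]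
  exact contDiff_const.mul (by exact_mod_cast cv_contDiff 1 h (kA_meas i j) (kA_le i j))

lemma coeffA_symm (g : V3 → ℝ) (i j : Fin 3) (v : V3) : coeffA g v i j = coeffA g v j i := by
  unfold coeffA projPi
  congr 2
  funext w
  simp only [eq_comm (a := i) (b := j)]
  ring

/-- the quadratic form kernel -/
lemma quadA_eq (h : SchwartzMap V3 ℝ) (v ξ : V3) :
    ∑ i, ∑ j, coeffA h v i j * ξ i * ξ j =
      (8 * π)⁻¹ * ∫ w, ((‖ξ‖ ^ 2 - (inner ℝ (v - w) ξ) ^ 2 / ‖v - w‖ ^ 2) * ‖v - w‖⁻¹) * h w ∧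
    Integrable (fun w => ((‖ξ‖ ^ 2 - (inner ℝ (v - w) ξ) ^ 2 / ‖v - w‖ ^ 2) * ‖v - w‖⁻¹) * h w) := by
  obtain ⟨C, hC0, hC⟩ := schwartz_bdd h
  have hI : ∀ i j, Integrable (fun w => (8 * π)⁻¹ * (kA i j (v - w) • h w) * ξ i * ξ j) := fun i j =>
    (((kap_mul_int'' h.integrable hC (kA_meas i j) (kA_le i j) v).const_mul _).mul_const _).mul_const _
  have e : ∀ w, (∑ i, ∑ j, (kA i j (v - w) • h w) * ξ i * ξ j) =
     ((‖ξ‖ ^ 2 - (inner ℝ (v - w) ξ) ^ 2 / ‖v - w‖ ^ 2) * ‖v - w‖⁻¹) * h w := by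
    intro w
    set z := v - w
    have e1 : ‖ξ‖ ^ 2 = ξ 0 ^ 2 + ξ 1 ^ 2 + ξ 2 ^ 2 := by
      rw [EuclideanSpace.real_norm_sq_eq]; simp [Fin.sum_univ_three]
    have e2 : inner ℝ z ξ = z 0 * ξ 0 + z 1 * ξ 1 + z 2 * ξ 2 := by
      simp [PiLp.inner_apply, Fin.sum_univ_three, mul_comm]
    rw [e1, e2]
    simp only [Fin.sum_univ_three, kA, projPi, smul_eq_mul]
    simp
    ring
  have hI2 : ∀ i j, Integrable (fun w => (kA i j (v - w) • h w) * ξ i * ξ j) := fun i j =>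
    ((kap_mul_int'' h.integrable hC (kA_meas i j) (kA_le i j) v).mul_const _).mul_const _
  constructor
  · simp_rw [← e]
    rw [integral_finsetSum _ (fun i _ => integrable_finsetSum _ fun j _ => hI2 i j), Finset.mul_sum]
    refine Finset.sum_congr rfl fun i _ => ?_
    rw [integral_finsetSum _ (fun j _ => hI2 i j), Finset.mul_sum]
    refine Finset.sum_congr rfl fun j _ => ?_
    rw [integral_mul_const, integral_mul_const, coeffA_eq, cv_eq]
    ring
  · simp_rw [← e]
    exact integrable_finsetSum _ fun i _ => integrable_finsetSum _ fun j _ => hI2 i j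

lemma quad_lower {n ξ z : V3} (hn : ‖n‖ = 1) (hnξ : inner ℝ n ξ = 0) (hz : z ≠ 0) :
    ‖ξ‖ ^ 2 * (inner ℝ n z) ^ 2 * ‖z‖⁻¹ ^ 3 ≤
      (‖ξ‖ ^ 2 - (inner ℝ z ξ) ^ 2 / ‖z‖ ^ 2) * ‖z‖⁻¹ := by
  have hz' : 0 < ‖z‖ := by simpa using hz
  rcases eq_or_ne ξ 0 with h | h
  · subst h; simp
  have hξ : 0 < ‖ξ‖ := by simpa using h
  have key : ‖ξ‖ ^ 2 * (inner ℝ n z) ^ 2 ≤ ‖z‖ ^ 2 * ‖ξ‖ ^ 2 - (inner ℝ z ξ) ^ 2 := by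
    set y := ‖ξ‖ ^ 2 • z - (inner ℝ z ξ) • ξ with hy
    have h1 : inner ℝ n y = ‖ξ‖ ^ 2 * inner ℝ n z := by
      simp [hy, inner_sub_right, inner_smul_right, hnξ]
    have h2 : ‖y‖ ^ 2 = ‖ξ‖ ^ 2 * (‖z‖ ^ 2 * ‖ξ‖ ^ 2 - (inner ℝ z ξ) ^ 2) := by
      rw [hy, norm_sub_sq_real, norm_smul, norm_smul, inner_smul_left, inner_smul_right]
      simp only [Real.norm_eq_abs, mul_pow, sq_abs, abs_norm, abs_pow]
      simp
      ring
    have h3 : (inner ℝ n y) ^ 2 ≤ ‖y‖ ^ 2 := by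
      have := abs_real_inner_le_norm n y
      rw [hn, one_mul] at this
      rw [← sq_abs]
      gcongr
    rw [h1, h2] at h3
    have h4 : 0 < ‖ξ‖ ^ 2 := by positivity
    nlinarith [le_of_mul_le_mul_left (show ‖ξ‖ ^ 2 * (‖ξ‖ ^ 2 * (inner ℝ n z) ^ 2) ≤ ‖ξ‖ ^ 2 * (‖z‖ ^ 2 * ‖ξ‖ ^ 2 - (inner ℝ z ξ) ^ 2) by nlinarith) h4]
  have : (‖ξ‖ ^ 2 - (inner ℝ z ξ) ^ 2 / ‖z‖ ^ 2) * ‖z‖⁻¹ =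
      (‖z‖ ^ 2 * ‖ξ‖ ^ 2 - (inner ℝ z ξ) ^ 2) * ‖z‖⁻¹ ^ 3 := by
    field_simp
  rw [this]
  gcongr

lemma exists_perp (ξ : V3) : ∃ n : V3, ‖n‖ = 1 ∧ inner ℝ n ξ = 0 := by
  have : ∃ n : V3, n ≠ 0 ∧ inner ℝ n ξ = 0 := by
    by_cases h : ξ 0 = 0
    · refine ⟨EuclideanSpace.single 0 1, by simp, ?_⟩
      rw [EuclideanSpace.inner_single_left]; simp [h]
    · refine ⟨!₂[-ξ 1, ξ 0, 0], fun h0 => h ?_, ?_⟩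
      · have := congrArg (fun x : V3 => x 1) h0
        simpa using this
      · simp [PiLp.inner_apply, Fin.sum_univ_three]; ring
  obtain ⟨n, hn, h⟩ := this
  refine ⟨‖n‖⁻¹ • n, ?_, ?_⟩
  · rw [norm_smul, norm_inv, norm_norm, inv_mul_cancel₀ (by simpa using hn)]
  · rw [inner_smul_left, h, mul_zero]

lemma slab_vol {n : V3} (hn : ‖n‖ = 1) (c : ℝ) (m : ℕ) (hm : 0 < m) :
    m * volume {w : V3 | w ∈ Metric.ball (0 : V3) 3 ∧ |inner ℝ n w - c| < 1 / (2 * m)} ≤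
      volume (Metric.ball (0 : V3) 4) := by
  set E := {w : V3 | w ∈ Metric.ball (0 : V3) 3 ∧ |inner ℝ n w - c| < 1 / (2 * m)} with hE
  have hEo : MeasurableSet E := by
    have h1 : IsOpen {w : V3 | |inner ℝ n w - c| < 1 / (2 * m)} :=
      isOpen_lt (by fun_prop) continuous_const
    exact measurableSet_ball.inter h1.measurableSet
  have hm' : (0 : ℝ) < m := by exact_mod_cast hm
  let S : ℕ → Set V3 := fun k => (fun w => w + (-((k : ℝ) / m)) • n) ⁻¹' E
  have hS : ∀ k, volume (S k) = volume E := fun k => measure_preimage_add_right _ _ _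
  have hSm : ∀ k, MeasurableSet (S k) := fun k => (measurable_add_const _) hEo
  have hnn : inner ℝ n n = (1 : ℝ) := by rw [real_inner_self_eq_norm_sq, hn]; norm_num
  have hdisj : (Finset.range m : Set ℕ).PairwiseDisjoint S := by
    intro a _ b _ hab
    rw [Function.onFun, Set.disjoint_left]
    rintro w ⟨_, ha⟩ ⟨_, hb⟩
    simp only [inner_add_right, inner_smul_right, hnn, mul_one] at ha hb
    have h1 : |(a : ℝ) / m - b / m| < 1 / m := by
      have e : (a : ℝ) / m - b / m = (inner ℝ n w + -((b : ℝ) / m) - c) - (inner ℝ n w + -((a : ℝ) / m) - c) := by ring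
      rw [e]
      refine (abs_sub _ _).trans_lt ?_
      have : (1 : ℝ) / m = 1 / (2 * m) + 1 / (2 * m) := by field_simp; norm_num
      linarith
    rw [← sub_div, abs_div, abs_of_pos hm', div_lt_div_iff_of_pos_right hm'] at h1
    have h2 : |(a : ℤ) - b| < 1 := by exact_mod_cast h1
    rw [Int.abs_lt_one_iff] at h2
    omega
  have hsub : (⋃ k ∈ Finset.range m, S k) ⊆ Metric.ball (0 : V3) 4 := by
    intro w hw
    simp only [mem_iUnion, Finset.mem_range] at hw
    obtain ⟨k, hk, hw, _⟩ := hw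
    simp only [mem_ball_zero_iff] at hw ⊢
    have hk' : (k : ℝ) / m ≤ 1 := by
      rw [div_le_one hm']; exact_mod_cast hk.le
    calc ‖w‖ = ‖(w + (-((k : ℝ) / m)) • n) + ((k : ℝ) / m) • n‖ := by
          congr 1; rw [neg_smul]; abel
      _ ≤ _ := norm_add_le _ _
      _ < 3 + 1 := by
          refine add_lt_add_of_lt_of_le hw ?_
          rw [norm_smul, hn, mul_one, Real.norm_of_nonneg (by positivity)]; exact hk'
      _ = 4 := by norm_num
  calc m * volume E = ∑ k ∈ Finset.range m, volume (S k) := by simp [hS]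
    _ = volume (⋃ k ∈ Finset.range m, S k) := (measure_biUnion_finset hdisj fun k _ => hSm k).symm
    _ ≤ _ := measure_mono hsub

lemma ent_pt {x s : ℝ} (hx : 0 ≤ x) : 0 ≤ x * log x + x * s + exp (-s) := by
  rcases hx.eq_or_lt with h | h
  · subst h; simp; positivity
  have h1 := Real.add_one_le_exp (-(log x + s))
  have h2 : exp (-s) = x * exp (-(log x + s)) := by
    rw [neg_add, Real.exp_add, Real.exp_neg (log x), Real.exp_log h]; field_simp
  rw [h2]
  have h3 : -(log x + s) ≤ exp (-(log x + s)) := by linarith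
  nlinarith

lemma ent_pt' {x : ℝ} (hx : 0 ≤ x) (v : V3) :
    0 ≤ x * log x + x * (2 + 2 * ‖v‖ ^ 2) + (1 + ‖v‖) ^ (-(4 : ℝ)) := by
  have hv : 0 ≤ ‖v‖ := norm_nonneg v
  have h := ent_pt (s := 4 * log (1 + ‖v‖)) hx
  have h1 : exp (-(4 * log (1 + ‖v‖))) = (1 + ‖v‖) ^ (-(4 : ℝ)) := by
    rw [Real.rpow_def_of_pos (by positivity)]; ring_nf
  have h2 : 4 * log (1 + ‖v‖) ≤ 2 + 2 * ‖v‖ ^ 2 := by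
    have := Real.log_le_sub_one_of_pos (show 0 < 1 + ‖v‖ by positivity)
    nlinarith [sq_nonneg (‖v‖ - 1)]
  rw [h1] at h
  nlinarith

lemma mom_int (h : SchwartzMap V3 ℝ) : Integrable (fun v => h v * ‖v‖ ^ 2) := by
  have := h.integrable_pow_mul volume 2
  refine this.mono' (by have := h.continuous; fun_prop) (ae_of_all _ fun v => ?_)
  rw [norm_mul, norm_pow, norm_norm, mul_comm]

lemma dec_int : Integrable (fun z : V3 => (1 + ‖z‖) ^ (-(4 : ℝ))) :=
  integrable_one_add_norm (by simp; norm_num)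

lemma ent_int (h : SchwartzMap V3 ℝ) (h0 : ∀ v, 0 ≤ h v) : Integrable (fun v => h v * log (h v)) := by
  obtain ⟨C, hC0, hC⟩ := schwartz_bdd h
  have i1 : Integrable (fun v => h v * (2 + 2 * ‖v‖ ^ 2)) := by
    have := (h.integrable (μ := volume)).const_mul 2 |>.add ((mom_int h).const_mul 2)
    refine this.congr (ae_of_all _ fun v => ?_)
    simp; ring
  have i2 : Integrable (fun v => h v * log (h v) + h v * (2 + 2 * ‖v‖ ^ 2) + (1 + ‖v‖) ^ (-(4 : ℝ))) := by
    refine (((h.integrable (μ := volume)).const_mul C).add i1 |>.add dec_int).mono' ?_ (ae_of_all _ fun v => ?_)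
    · apply Measurable.aestronglyMeasurable
      have := h.continuous.measurable
      fun_prop
    · rw [Real.norm_of_nonneg (ent_pt' (h0 v) v)]
      have h1 : h v * log (h v) ≤ C * h v := by
        have h2 : log (h v) ≤ h v := Real.log_le_self (h0 v)
        have h3 : h v ≤ C := (le_abs_self _).trans (hC v)
        nlinarith [h0 v]
      simp only [Pi.add_apply]
      linarith
  have := (i2.sub dec_int).sub i1
  refine this.congr (ae_of_all _ fun v => ?_)
  simp

lemma ent_small (M : ℝ) (hM : 0 < M) : ∃ δ : ℝ, 0 < δ ∧ ∀ h : SchwartzMap V3 ℝ, (∀ v, 0 ≤ h v) →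
    IsNormalized h → (∫ v, h v * log (h v)) ≤ M → ∀ E : Set V3, MeasurableSet E →
    volume E ≤ ENNReal.ofReal δ → ∫ v in E, h v ≤ 1 / 3 := by
  set C0 : ℝ := ∫ v : V3, (1 + ‖v‖) ^ (-(4 : ℝ)) with hC0
  have hC0' : 0 ≤ C0 := integral_nonneg fun v => by positivity
  set L : ℝ := 6 * (M + 8 + C0) with hL
  have hLpos : 0 < L := by positivity
  refine ⟨1 / 6 / exp L, by positivity, fun h h0 hn he E hE hvol => ?_⟩
  have i1 : Integrable (fun v => h v * (2 + 2 * ‖v‖ ^ 2)) := by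
    have := (h.integrable (μ := volume)).const_mul 2 |>.add ((mom_int h).const_mul 2)
    refine this.congr (ae_of_all _ fun v => ?_)
    simp; ring
  have i2 : Integrable (fun v => h v * log (h v) + h v * (2 + 2 * ‖v‖ ^ 2) + (1 + ‖v‖) ^ (-(4 : ℝ))) :=
    ((ent_int h h0).add i1).add dec_int
  have e2 : ∫ v, (h v * log (h v) + h v * (2 + 2 * ‖v‖ ^ 2) + (1 + ‖v‖) ^ (-(4 : ℝ))) ≤ M + 8 + C0 := by
    have i12 : Integrable (fun v => h v * log (h v) + h v * (2 + 2 * ‖v‖ ^ 2)) := (ent_int h h0).add i1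
    rw [integral_add i12 dec_int, integral_add (ent_int h h0) i1]
    have : ∫ v, h v * (2 + 2 * ‖v‖ ^ 2) = 8 := by
      have e : ∀ v, h v * (2 + 2 * ‖v‖ ^ 2) = 2 * h v + 2 * (h v * ‖v‖ ^ 2) := fun v => by ring
      simp_rw [e]
      rw [integral_add (h.integrable.const_mul 2) ((mom_int h).const_mul 2), integral_const_mul,
        integral_const_mul, hn.1, hn.2.2]; norm_num
    linarith
  have hfin : volume E ≠ ⊤ := (hvol.trans_lt ENNReal.ofReal_lt_top).ne
  have hvr : volume.real E ≤ 1 / 6 / exp L := by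
    rw [measureReal_def]; exact ENNReal.toReal_le_of_le_ofReal (by positivity) hvol
  calc ∫ v in E, h v ≤ ∫ v in E, (exp L + L⁻¹ * (h v * log (h v) + h v * (2 + 2 * ‖v‖ ^ 2) + (1 + ‖v‖) ^ (-(4 : ℝ)))) := by
        refine setIntegral_mono h.integrable.integrableOn
          ((integrableOn_const hfin).add (i2.const_mul _).integrableOn) fun v => ?_
        have hb := ent_pt' (h0 v) v
        by_cases hN : h v ≤ exp L
        · have : 0 ≤ L⁻¹ * (h v * log (h v) + h v * (2 + 2 * ‖v‖ ^ 2) + (1 + ‖v‖) ^ (-(4 : ℝ))) := by positivity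
          linarith
        · push Not at hN
          have hl : L < log (h v) := (Real.lt_log_iff_exp_lt ((exp_pos L).trans hN)).2 hN
          have h3 : h v = L⁻¹ * (h v * L) := by field_simp
          have h4 : h v * L ≤ h v * log (h v) := by have := h0 v; gcongr
          have h5 : 0 ≤ h v * (2 + 2 * ‖v‖ ^ 2) := mul_nonneg (h0 v) (by positivity)
          have h6 : 0 ≤ (1 + ‖v‖) ^ (-(4 : ℝ)) := by positivity
          have h7 : L⁻¹ * (h v * L) ≤ L⁻¹ * (h v * log (h v) + h v * (2 + 2 * ‖v‖ ^ 2) + (1 + ‖v‖) ^ (-(4 : ℝ))) := by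
            gcongr; linarith
          have := exp_pos L
          linarith
    _ = volume.real E * exp L + L⁻¹ * ∫ v in E, (h v * log (h v) + h v * (2 + 2 * ‖v‖ ^ 2) + (1 + ‖v‖) ^ (-(4 : ℝ))) := by
        have ic : Integrable (fun _ : V3 => exp L) (volume.restrict E) := integrableOn_const hfin
        have i3 : Integrable (fun v => L⁻¹ * (h v * log (h v) + h v * (2 + 2 * ‖v‖ ^ 2) + (1 + ‖v‖) ^ (-(4 : ℝ)))) (volume.restrict E) :=
          (i2.const_mul _).integrableOn
        rw [integral_add ic i3, setIntegral_const,
          integral_const_mul, smul_eq_mul]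
    _ ≤ (1 / 6 / exp L) * exp L + L⁻¹ * (M + 8 + C0) := by
        gcongr
        refine (setIntegral_le_integral i2 (ae_of_all _ fun v => ent_pt' (h0 v) v)).trans e2
    _ = 1 / 3 := by
        have : L⁻¹ * (M + 8 + C0) = 1 / 6 := by rw [hL]; field_simp
        rw [this]; field_simp; norm_num


lemma quad_nonneg (ξ z : V3) : 0 ≤ (‖ξ‖ ^ 2 - (inner ℝ z ξ) ^ 2 / ‖z‖ ^ 2) * ‖z‖⁻¹ := by
  obtain ⟨n, hn, hp⟩ := exists_perp ξ
  by_cases hz : z = 0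
  · simp [hz]
  · exact le_trans (by positivity) (quad_lower hn hp hz)

lemma jap_ge_one (v : V3) : 1 ≤ jap v := by
  unfold jap; rw [Real.one_le_sqrt]; nlinarith [norm_nonneg v]

lemma jap_pos (v : V3) : 0 < jap v := by linarith [jap_ge_one v]

lemma norm_le_jap (v : V3) : ‖v‖ ≤ jap v := by
  unfold jap; apply Real.le_sqrt_of_sq_le; linarith

lemma coercive (M : ℝ) (hM : 0 < M) : ∃ c : ℝ, 0 < c ∧ ∀ h : SchwartzMap V3 ℝ, (∀ v, 0 ≤ h v) →
    IsNormalized h → (∫ v, h v * log (h v)) ≤ M → ∀ v ξ : V3,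
    c * jap v ^ (-(3 : ℝ)) * ‖ξ‖ ^ 2 ≤ ∑ i, ∑ j, coeffA h v i j * ξ i * ξ j := by
  obtain ⟨δ, hδ, hE⟩ := ent_small M hM
  obtain ⟨m, hm⟩ := exists_nat_gt (volume.real (Metric.ball (0 : V3) 4) / δ)
  have hm' : (0 : ℝ) < m := lt_of_le_of_lt (by positivity) hm
  have hmn : 0 < m := by exact_mod_cast hm'
  set η : ℝ := 1 / (2 * m) with hη
  have hηpos : 0 < η := by positivity
  refine ⟨(8 * π)⁻¹ * (η ^ 2 / 192), by positivity, fun h h0 hn he v ξ => ?_⟩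
  obtain ⟨n, hn1, hnξ⟩ := exists_perp ξ
  set B := Metric.ball (0 : V3) 3 with hB
  set E := {w : V3 | w ∈ B ∧ |inner ℝ n w - inner ℝ n v| < 1 / (2 * m)} with hEdef
  have hBm : MeasurableSet B := measurableSet_ball
  have hEm : MeasurableSet E := by
    have h1 : IsOpen {w : V3 | |inner ℝ n w - inner ℝ n v| < 1 / (2 * m)} :=
      isOpen_lt (by fun_prop) continuous_const
    exact measurableSet_ball.inter h1.measurableSet
  have hEv : volume E ≤ ENNReal.ofReal δ := by
    have h1 := slab_vol hn1 (inner ℝ n v) m hmn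
    have hf : volume (Metric.ball (0 : V3) 4) ≠ ⊤ := measure_ball_lt_top.ne
    rw [← ENNReal.ofReal_toReal hf, ← measureReal_def] at h1
    have h2 : volume.real (Metric.ball (0 : V3) 4) ≤ m * δ := by
      rw [div_lt_iff₀ hδ] at hm; exact hm.le
    have h3 := h1.trans (ENNReal.ofReal_le_ofReal h2)
    rw [ENNReal.ofReal_mul hm'.le, ENNReal.ofReal_natCast] at h3
    exact (ENNReal.mul_le_mul_iff_right (by exact_mod_cast hmn.ne') (ENNReal.natCast_ne_top m)).1 h3
  have hE1 := hE h h0 hn he E hEm hEv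
  have hi : Integrable (fun v => h v) := h.integrable
  have hB1 : ∫ w in Bᶜ, h w ≤ 1 / 3 := by
    have h1 : ∫ w in Bᶜ, h w ≤ ∫ w in Bᶜ, (1 / 9) * (h w * ‖w‖ ^ 2) := by
      refine setIntegral_mono_on hi.integrableOn ((mom_int h).const_mul _).integrableOn hBm.compl fun w hw => ?_
      simp only [hB, mem_compl_iff, mem_ball_zero_iff, not_lt] at hw
      have : 9 ≤ ‖w‖ ^ 2 := by nlinarith
      nlinarith [h0 w]
    refine h1.trans ((setIntegral_le_integral ((mom_int h).const_mul _) (ae_of_all _ fun w => ?_)).trans ?_)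
    · have := h0 w; simp only [Pi.zero_apply]; positivity
    · rw [integral_const_mul, hn.2.2]; norm_num
  have hEB : E ⊆ B := fun w hw => hw.1
  have hBE : 1 / 3 ≤ ∫ w in B \ E, h w := by
    have h1 := integral_add_compl hBm hi
    have h2 := setIntegral_sdiff hEm hi.integrableOn hEB (f := fun w => h w) (μ := volume)
    rw [h2]; have := hn.1; linarith
  obtain ⟨hq, hqi⟩ := quadA_eq h v ξ
  rw [hq, mul_assoc, mul_assoc]
  refine mul_le_mul_of_nonneg_left ?_ (by positivity)
  have hv := norm_nonneg v
  have hj := jap_pos v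
  set κ : ℝ := ‖ξ‖ ^ 2 * η ^ 2 * ((3 + ‖v‖)⁻¹) ^ 3 with hκ
  have h4 : κ * (1 / 3) ≤ ∫ w in B \ E, κ * h w := by
    rw [integral_const_mul]; gcongr
  have h5 : ∫ w in B \ E, κ * h w ≤ ∫ w in B \ E, ((‖ξ‖ ^ 2 - (inner ℝ (v - w) ξ) ^ 2 / ‖v - w‖ ^ 2) * ‖v - w‖⁻¹) * h w := by
    refine setIntegral_mono_on (hi.const_mul _).integrableOn hqi.integrableOn (hBm.diff hEm) fun w hw => ?_
    refine mul_le_mul_of_nonneg_right ?_ (h0 w)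
    have hw1 : ‖w‖ < 3 := by simpa [hB] using hw.1
    have hw2 : η ≤ |inner ℝ n w - inner ℝ n v| := by
      by_contra hc; exact hw.2 ⟨hw.1, not_le.1 hc⟩
    have hw3 : η ^ 2 ≤ (inner ℝ n (v - w)) ^ 2 := by
      rw [inner_sub_right, ← sq_abs (inner ℝ n v - inner ℝ n w), abs_sub_comm]; gcongr
    have hz : v - w ≠ 0 := by
      intro hz; rw [hz] at hw3; simp at hw3; nlinarith
    have hz' : 0 < ‖v - w‖ := by simpa using hz
    refine le_trans ?_ (quad_lower hn1 hnξ hz)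
    have : ‖v - w‖ ≤ 3 + ‖v‖ := (norm_sub_le _ _).trans (by linarith)
    rw [hκ]; gcongr
  have h6 := setIntegral_le_integral (s := B \ E) hqi (ae_of_all _ fun w => mul_nonneg (quad_nonneg ξ (v - w)) (h0 w))
  refine le_trans ?_ (h4.trans (h5.trans h6))
  have h7 : jap v ^ (-(3 : ℝ)) = (jap v)⁻¹ ^ 3 := by
    rw [Real.rpow_neg hj.le, inv_pow]; norm_cast
  have h8 : (4 * jap v)⁻¹ ≤ (3 + ‖v‖)⁻¹ := by
    have := jap_ge_one v; have := norm_le_jap v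
    apply inv_anti₀ (by positivity); linarith
  have h9 : ((4 * jap v)⁻¹) ^ 3 ≤ ((3 + ‖v‖)⁻¹) ^ 3 := by gcongr
  rw [h7, hκ]
  have h10 : ((4 * jap v)⁻¹) ^ 3 = (jap v)⁻¹ ^ 3 / 64 := by rw [mul_inv]; ring
  rw [h10] at h9
  have h11 : 0 ≤ ‖ξ‖ ^ 2 * η ^ 2 := by positivity
  calc η ^ 2 / 192 * ((jap v)⁻¹ ^ 3 * ‖ξ‖ ^ 2) = (‖ξ‖ ^ 2 * η ^ 2) * ((jap v)⁻¹ ^ 3 / 64) * (1 / 3) := by ring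
    _ ≤ _ := by gcongr


lemma hasDeriv_max {φ φ' : ℝ → ℝ} {C r : ℝ} (hr : 1 < r) (h0 : φ 0 = 0) (h0' : φ' 0 = 0)
    (hd : ∀ x, 0 < x → HasDerivAt φ (φ' x) x) (hb : ∀ x, 0 ≤ x → |φ x| ≤ C * x ^ r) (l s : ℝ) :
    HasDerivAt (fun s => φ (max (s - l) 0)) (φ' (max (s - l) 0)) s := by
  rcases lt_trichotomy s l with h | h | h
  · have e : max (s - l) 0 = 0 := max_eq_right (by linarith)
    rw [e, h0']
    refine (hasDerivAt_const s (0 : ℝ)).congr_of_eventuallyEq ?_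
    filter_upwards [gt_mem_nhds h] with u hu
    rw [max_eq_right (by linarith), h0]
  · subst h
    rw [sub_self, max_self, h0', hasDerivAt_iff_isLittleO_nhds_zero]
    simp only [sub_self, max_self, h0, smul_zero, sub_zero, add_sub_cancel_left]
    have hC : ∀ u : ℝ, ‖φ (max u 0)‖ ≤ |C| * ‖|u| ^ r‖ := by
      intro u
      rw [Real.norm_eq_abs, Real.norm_of_nonneg (by positivity)]
      refine (hb _ (le_max_right _ _)).trans ?_
      have h1 : max u 0 ^ r ≤ |u| ^ r :=
        Real.rpow_le_rpow (le_max_right _ _) (max_le (le_abs_self u) (abs_nonneg u)) (by linarith)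
      have h2 : 0 ≤ max u 0 ^ r := Real.rpow_nonneg (le_max_right _ _) _
      exact mul_le_mul (le_abs_self C) h1 h2 (abs_nonneg C)
    refine (Asymptotics.IsBigO.of_bound |C| (Eventually.of_forall hC)).trans_isLittleO ?_
    have h3 : (fun u : ℝ => |u| ^ r) = fun u => |u| ^ (r - 1) * |u| := by
      funext u
      rcases eq_or_ne u 0 with hu | hu
      · subst hu; simp; rw [Real.zero_rpow (by linarith)]
      · rw [Real.rpow_sub_one (by simpa using hu)]; field_simp
    rw [h3]
    have h4 : Tendsto (fun u : ℝ => |u| ^ (r - 1)) (nhds 0) (nhds 0) := by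
      have : Continuous fun u : ℝ => |u| ^ (r - 1) :=
        continuous_abs.rpow_const fun _ => Or.inr (by linarith)
      have := this.tendsto 0
      rwa [abs_zero, Real.zero_rpow (by linarith)] at this
    have h5 := ((Asymptotics.isLittleO_one_iff ℝ).2 h4).mul_isBigO (Asymptotics.isBigO_refl (fun u : ℝ => |u|) (nhds 0))
    simp only [one_mul] at h5
    exact h5.trans_isBigO (Asymptotics.IsBigO.of_bound 1 (Eventually.of_forall fun u => by simp))
  · have hp : 0 < s - l := by linarith
    have e : max (s - l) 0 = s - l := max_eq_left hp.le
    rw [e]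
    have h1 := (hd (s - l) hp).comp s ((hasDerivAt_id s).sub_const l)
    rw [mul_one] at h1
    refine h1.congr_of_eventuallyEq ?_
    filter_upwards [lt_mem_nhds h] with u hu
    rw [max_eq_left (by linarith)]; rfl

def be (p ε l s : ℝ) : ℝ := max (s - l) 0 ^ (p + 1) / (max (s - l) 0 + ε)
def be1 (p ε l s : ℝ) : ℝ :=
  max (s - l) 0 ^ p * (p * max (s - l) 0 + (p + 1) * ε) / (max (s - l) 0 + ε) ^ 2
def be2 (p ε l s : ℝ) : ℝ :=
  max (s - l) 0 ^ (p - 1) * (p * (p - 1) * max (s - l) 0 ^ 2 + 2 * (p ^ 2 - 1) * ε * max (s - l) 0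
    + p * (p + 1) * ε ^ 2) / (max (s - l) 0 + ε) ^ 3

section
variable {p ε : ℝ} (hp : 3 / 2 < p) (hε : 0 < ε)
include hp hε

lemma be_hasDeriv (l s : ℝ) : HasDerivAt (be p ε l) (be1 p ε l s) s := by
  refine hasDeriv_max (φ := fun x => x ^ (p + 1) / (x + ε))
    (φ' := fun x => x ^ p * (p * x + (p + 1) * ε) / (x + ε) ^ 2) (C := ε⁻¹) (r := p + 1) (by linarith)
    (by simp [Real.zero_rpow (show p + 1 ≠ 0 by linarith)])
    (by simp [Real.zero_rpow (show p ≠ 0 by linarith)]) ?_ ?_ l s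
  · intro x hx
    have h1 : HasDerivAt (fun x => x ^ (p + 1)) ((p + 1) * x ^ (p + 1 - 1)) x :=
      Real.hasDerivAt_rpow_const (Or.inl hx.ne')
    have h2 := h1.div ((hasDerivAt_id x).add_const ε) (by simp; linarith)
    refine h2.congr_deriv ?_
    simp only [id, add_sub_cancel_right, Real.rpow_add_one hx.ne']
    ring
  · intro x hx
    rw [abs_of_nonneg (by positivity), div_eq_inv_mul]
    gcongr; linarith

lemma be1_nonneg (l s : ℝ) : 0 ≤ be1 p ε l s := by
  have h0 : 0 ≤ max (s - l) 0 := le_max_right _ _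
  have : 0 < p := by linarith
  unfold be1; positivity

lemma be_nonneg (l s : ℝ) : 0 ≤ be p ε l s := by
  have h0 : 0 ≤ max (s - l) 0 := le_max_right _ _
  unfold be; positivity

lemma be_le (l s : ℝ) : be p ε l s ≤ max (s - l) 0 ^ p := by
  have h0 : 0 ≤ max (s - l) 0 := le_max_right _ _
  unfold be
  generalize max (s - l) 0 = x at *
  rw [Real.rpow_add_one' h0 (by linarith), div_le_iff₀ (by positivity)]
  gcongr; linarith

lemma be1_le_aux (x : ℝ) (hx : 0 ≤ x) :
    x ^ p * (p * x + (p + 1) * ε) / (x + ε) ^ 2 ≤ (p + 1) * (x ^ p / (x + ε)) := by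
  have : 0 < p := by linarith
  have h : p * x + (p + 1) * ε ≤ (p + 1) * (x + ε) := by nlinarith
  calc x ^ p * (p * x + (p + 1) * ε) / (x + ε) ^ 2 ≤ x ^ p * ((p + 1) * (x + ε)) / (x + ε) ^ 2 := by gcongr
    _ = _ := by field_simp

lemma be1_le (l s : ℝ) : be1 p ε l s ≤ (p + 1) * max (s - l) 0 ^ (p - 1) := by
  have h0 : 0 ≤ max (s - l) 0 := le_max_right _ _
  unfold be1
  generalize max (s - l) 0 = x at *
  refine (be1_le_aux hp hε x h0).trans ?_
  have : 0 < p := by linarith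
  have e : x ^ p = x ^ (p - 1) * x := by
    rw [← Real.rpow_add_one' h0 (by linarith)]; ring_nf
  rw [e]
  gcongr
  rw [div_le_iff₀ (by positivity)]
  gcongr; linarith

lemma be1_hasDeriv (l s : ℝ) : HasDerivAt (be1 p ε l) (be2 p ε l s) s := by
  refine hasDeriv_max (φ := fun x => x ^ p * (p * x + (p + 1) * ε) / (x + ε) ^ 2)
    (φ' := fun x => x ^ (p - 1) * (p * (p - 1) * x ^ 2 + 2 * (p ^ 2 - 1) * ε * x
    + p * (p + 1) * ε ^ 2) / (x + ε) ^ 3) (C := (p + 1) * ε⁻¹) (r := p) (by linarith)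
    (by simp [Real.zero_rpow (show p ≠ 0 by linarith)])
    (by simp [Real.zero_rpow (show p - 1 ≠ 0 by linarith)]) ?_ ?_ l s
  · intro x hx
    have h1 : HasDerivAt (fun x => x ^ p) (p * x ^ (p - 1)) x :=
      Real.hasDerivAt_rpow_const (Or.inl hx.ne')
    have h2 : HasDerivAt (fun x => p * x + (p + 1) * ε) (p * 1) x :=
      ((hasDerivAt_id x).const_mul p).add_const _
    have h3 : HasDerivAt (fun x => (x + ε) ^ 2) (2 * (x + ε)) x := by
      refine (((hasDerivAt_id x).add_const ε).pow 2).congr_deriv ?_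
      simp
    have h4 := (h1.mul h2).div h3 (by positivity)
    refine h4.congr_deriv ?_
    have e : x ^ p = x ^ (p - 1) * x := by
      rw [← Real.rpow_add_one hx.ne']; ring_nf
    simp only [Pi.mul_apply, e]
    have : x + ε ≠ 0 := by positivity
    field_simp
    ring
  · intro x hx
    have : 0 < p := by linarith
    rw [abs_of_nonneg (by positivity), mul_assoc]
    refine (be1_le_aux hp hε x hx).trans ?_
    rw [div_eq_inv_mul]
    gcongr; linarith

lemma be2_cont (l : ℝ) : Continuous (be2 p ε l) := by
  unfold be2
  have h1 : Continuous fun s : ℝ => max (s - l) 0 := by fun_prop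
  refine Continuous.div ((h1.rpow_const fun _ => Or.inr (by linarith)).mul (by fun_prop)) (by fun_prop) fun s => ?_
  have h0 : 0 ≤ max (s - l) 0 := le_max_right _ _
  positivity

lemma be2_ge (l s : ℝ) :
    p * (p - 1) * (max (s - l) 0 ^ (p - 1) / (max (s - l) 0 + ε)) ≤ be2 p ε l s := by
  have h0 : 0 ≤ max (s - l) 0 := le_max_right _ _
  unfold be2
  generalize max (s - l) 0 = x at *
  have h1 : 0 < p := by linarith
  have h2 : 0 < p - 1 := by linarith
  have h : p * (p - 1) * (x + ε) ^ 2 ≤ p * (p - 1) * x ^ 2 + 2 * (p ^ 2 - 1) * ε * x + p * (p + 1) * ε ^ 2 := by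
    have e1 : 0 ≤ ε * x := by positivity
    have e2 : 0 ≤ ε ^ 2 := by positivity
    nlinarith
  calc p * (p - 1) * (x ^ (p - 1) / (x + ε)) = x ^ (p - 1) * (p * (p - 1) * (x + ε) ^ 2) / (x + ε) ^ 3 := by
        field_simp
    _ ≤ _ := by gcongr

lemma be2_nonneg (l s : ℝ) : 0 ≤ be2 p ε l s := by
  refine le_trans ?_ (be2_ge hp hε l s)
  have h0 : 0 ≤ max (s - l) 0 := le_max_right _ _
  have h1 : 0 < p := by linarith
  have h2 : 0 < p - 1 := by linarith
  positivity

lemma be1_sq (l s : ℝ) :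
    be1 p ε l s ^ 2 ≤ (p + 1) ^ 2 / (p * (p - 1)) * max (s - l) 0 ^ p * be2 p ε l s := by
  have h0 : 0 ≤ max (s - l) 0 := le_max_right _ _
  have h1 : 0 < p := by linarith
  have h2 : 0 < p - 1 := by linarith
  have a1 : be1 p ε l s ≤ (p + 1) * (max (s - l) 0 ^ p / (max (s - l) 0 + ε)) := be1_le_aux hp hε _ h0
  have a2 := be1_le hp hε l s
  have a3 := be2_ge hp hε l s
  have a0 := be1_nonneg hp hε l s
  generalize max (s - l) 0 = x at *
  calc be1 p ε l s ^ 2 ≤ ((p + 1) * x ^ (p - 1)) * ((p + 1) * (x ^ p / (x + ε))) := by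
        rw [sq]; exact mul_le_mul a2 a1 a0 (by positivity)
    _ = (p + 1) ^ 2 / (p * (p - 1)) * x ^ p * (p * (p - 1) * (x ^ (p - 1) / (x + ε))) := by field_simp
    _ ≤ _ := by gcongr

lemma be1_zero_of_be2 (l s : ℝ) (h : be2 p ε l s = 0) : be1 p ε l s = 0 := by
  have := be1_sq hp hε l s
  rw [h, mul_zero] at this
  nlinarith [sq_nonneg (be1 p ε l s), pow_eq_zero_iff (two_ne_zero) |>.1 (le_antisymm this (sq_nonneg _))]

lemma G_hasDeriv (l s : ℝ) :
    HasDerivAt (fun s => s * be1 p ε l s - be p ε l s) (s * be2 p ε l s) s := by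
  have := ((hasDerivAt_id s).mul (be1_hasDeriv hp hε l s)).sub (be_hasDeriv hp hε l s)
  refine this.congr_deriv ?_
  simp

lemma sG_le {k l s : ℝ} (hs : 0 ≤ s) (hk : 0 < k) (hkl : k < l) :
    s * (s * be1 p ε l s - be p ε l s) ≤
      (p + 1) * (2 + 2 * (l ^ 2 / (l - k) ^ 2)) * max (s - k) 0 ^ (p + 1) := by
  have h1 : 0 < p := by linarith
  have hd : 0 < l - k := by linarith
  have a1 := be1_le hp hε l s
  have a0 := be_nonneg hp hε l s
  have a2 := be1_nonneg hp hε l s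
  have h3 : s * (s * be1 p ε l s - be p ε l s) ≤ s ^ 2 * ((p + 1) * max (s - l) 0 ^ (p - 1)) := by
    calc s * (s * be1 p ε l s - be p ε l s) ≤ s ^ 2 * be1 p ε l s := by nlinarith [mul_nonneg hs a0]
      _ ≤ _ := by gcongr
  refine h3.trans ?_
  have hy0 : 0 ≤ max (s - k) 0 := le_max_right _ _
  rcases le_or_gt s l with h | h
  · rw [max_eq_right (by linarith : s - l ≤ 0), Real.zero_rpow (by linarith)]
    simp only [mul_zero]
    positivity
  · rw [max_eq_left (by linarith : 0 ≤ s - l), max_eq_left (by linarith : 0 ≤ s - k)]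
    have hy : 0 < s - k := by linarith
    have e : (s - k) ^ (p + 1) = (s - k) ^ 2 * (s - k) ^ (p - 1) := by
      rw [← Real.rpow_natCast, ← Real.rpow_add hy]; congr 1; push_cast; ring
    have hx : (s - l) ^ (p - 1) ≤ (s - k) ^ (p - 1) :=
      Real.rpow_le_rpow (by linarith) (by linarith) (by linarith)
    have hs2 : s ^ 2 ≤ (2 + 2 * (l ^ 2 / (l - k) ^ 2)) * (s - k) ^ 2 := by
      have h5 : 1 ≤ (s - k) ^ 2 / (l - k) ^ 2 := by
        rw [one_le_div (by positivity)]; gcongr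
      have h6 : l ^ 2 ≤ l ^ 2 * ((s - k) ^ 2 / (l - k) ^ 2) := le_mul_of_one_le_right (sq_nonneg l) h5
      have h7 : l ^ 2 / (l - k) ^ 2 * (s - k) ^ 2 = l ^ 2 * ((s - k) ^ 2 / (l - k) ^ 2) := by ring
      have h8 : s ^ 2 ≤ 2 * (s - k) ^ 2 + 2 * l ^ 2 := by nlinarith [sq_nonneg (s - k - l), sq_nonneg (s - k - k)]
      nlinarith
    rw [e]
    calc s ^ 2 * ((p + 1) * (s - l) ^ (p - 1)) ≤
        ((2 + 2 * (l ^ 2 / (l - k) ^ 2)) * (s - k) ^ 2) * ((p + 1) * (s - k) ^ (p - 1)) := by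
          gcongr
      _ = _ := by ring
end

lemma xp_le {p k l s : ℝ} (hp : 3 / 2 < p) (hkl : k < l) :
    max (s - l) 0 ^ p ≤ (l - k)⁻¹ * max (s - k) 0 ^ (p + 1) := by
  have hd : 0 < l - k := by linarith
  have hy0 : 0 ≤ max (s - k) 0 := le_max_right _ _
  rcases le_or_gt s l with h | h
  · rw [max_eq_right (by linarith : s - l ≤ 0), Real.zero_rpow (by linarith)]
    positivity
  · rw [max_eq_left (by linarith : 0 ≤ s - l), max_eq_left (by linarith : 0 ≤ s - k)]
    have hy : 0 < s - k := by linarith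
    have hx : (s - l) ^ p ≤ (s - k) ^ p :=
      Real.rpow_le_rpow (by linarith) (by linarith) (by linarith)
    rw [Real.rpow_add_one hy.ne', inv_mul_eq_div, le_div_iff₀ hd]
    have : 0 ≤ (s - k) ^ p := by positivity
    exact mul_le_mul hx (by linarith) hd.le this


def NN (h : V3 → ℝ) (v : V3) : ℝ := cv kap h v

lemma NN_cont (h : SchwartzMap V3 ℝ) : Continuous (NN h) :=
  (cv_contDiff 0 h kap_meas (fun z => by rw [abs_of_nonneg (kap_nonneg z)])).continuous

lemma NN_int (h : SchwartzMap V3 ℝ) (v : V3) : Integrable (fun z => kap z * h (v - z)) := by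
  obtain ⟨C, hC0, hC⟩ := schwartz_bdd h
  exact kap_mul_int' h.integrable hC kap_meas (fun z => by rw [abs_of_nonneg (kap_nonneg z)]) v

lemma NN_nonneg (h : SchwartzMap V3 ℝ) (h0 : ∀ v, 0 ≤ h v) (v : V3) : 0 ≤ NN h v :=
  integral_nonneg fun z => mul_nonneg (kap_nonneg z) (h0 _)

lemma cv_le_NN (h : SchwartzMap V3 ℝ) (h0 : ∀ v, 0 ≤ h v) {k : V3 → ℝ}
    (hkb : ∀ z, |k z| ≤ kap z) (v : V3) : |cv k h v| ≤ NN h v := by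
  unfold cv
  rw [← Real.norm_eq_abs]
  refine norm_integral_le_of_norm_le (NN_int h v) (ae_of_all _ fun z => ?_)
  rw [norm_smul, Real.norm_eq_abs, Real.norm_of_nonneg (h0 _)]
  exact mul_le_mul_of_nonneg_right (hkb z) (h0 _)

lemma coeffA_le (h : SchwartzMap V3 ℝ) (h0 : ∀ v, 0 ≤ h v) (v : V3) (i j : Fin 3) :
    |coeffA h v i j| ≤ NN h v := by
  rw [coeffA_eq, abs_mul, abs_of_nonneg (by positivity)]
  have h1 := cv_le_NN h h0 (kA_le i j) v
  have h2 : (8 * π)⁻¹ ≤ 1 := inv_le_one_of_one_le₀ (by nlinarith [Real.pi_gt_three])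
  calc (8 * π)⁻¹ * |cv (kA i j) h v| ≤ 1 * NN h v := by gcongr
    _ = _ := one_mul _

lemma pda_le (h : SchwartzMap V3 ℝ) (h0 : ∀ v, 0 ≤ h v) (v : V3) (i : Fin 3) :
    |pd i (coeffa h) v| ≤ NN h v := by
  rw [pd_coeffa, abs_neg, abs_mul, abs_of_nonneg (a := (4 * π)⁻¹) (by positivity)]
  have h1 := cv_le_NN h h0 (k2_le i) v
  have h2 : (4 * π)⁻¹ ≤ 1 := inv_le_one_of_one_le₀ (by nlinarith [Real.pi_gt_three])
  calc (4 * π)⁻¹ * |cv (k2 i) h v| ≤ 1 * NN h v := by gcongr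
    _ = _ := one_mul _

lemma xr_cont (h : SchwartzMap V3 ℝ) (l : ℝ) {r : ℝ} (hr : 0 < r) :
    Continuous (fun v => max (h v - l) 0 ^ r) :=
  Continuous.rpow_const (by have := h.continuous; fun_prop) fun _ => Or.inr hr.le

lemma xr_hcs (h : SchwartzMap V3 ℝ) {l r : ℝ} (hl : 0 < l) (hr : 0 < r) :
    HasCompactSupport (fun v => max (h v - l) 0 ^ r) := by
  have h1 : ∀ᶠ v in cocompact V3, h v < l := by
    have := h.toZeroAtInfty.zero_at_infty'
    exact this.eventually_lt_const hl
  rw [hasCompactSupport_iff_eventuallyEq]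
  rw [Filter.coclosedCompact_eq_cocompact]
  filter_upwards [h1] with v hv
  rw [max_eq_right (by linarith), Real.zero_rpow hr.ne']; rfl

lemma xr_int (h : SchwartzMap V3 ℝ) {l r : ℝ} (hl : 0 < l) (hr : 0 < r) :
    Integrable (fun v => max (h v - l) 0 ^ r) :=
  (xr_cont h l hr).integrable_of_hasCompactSupport (xr_hcs h hl hr)

def Kerr (k l : ℝ) : ℝ := (2 + k * ∫ z, kap1 z) / (l - k) + 2 * ∫ z, kap1 z

lemma Kerr_nonneg {k l : ℝ} (hk : 0 < k) (hkl : k < l) : 0 ≤ Kerr k l := by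
  have : 0 ≤ ∫ z, kap1 z := integral_nonneg kap1_nonneg
  have : 0 < l - k := by linarith
  unfold Kerr; positivity

lemma young {a b p : ℝ} (ha : 0 ≤ a) (hb : 0 ≤ b) (hp : 0 < p) : a ^ p * b ≤ a ^ (p + 1) + b ^ (p + 1) := by
  have e : ∀ x : ℝ, 0 ≤ x → x ^ (p + 1) = x ^ p * x := fun x hx => Real.rpow_add_one' hx (by linarith)
  rw [e a ha, e b hb]
  have h1 : 0 ≤ a ^ p := by positivity
  have h2 : 0 ≤ b ^ p := by positivity
  rcases le_total a b with h | h
  · have : a ^ p ≤ b ^ p := by gcongr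
    nlinarith
  · nlinarith [mul_nonneg h2 hb]

lemma err_int (h : SchwartzMap V3 ℝ) (l p : ℝ) (hl : 0 < l) (hp : 3 / 2 < p) :
    Integrable (fun v => max (h v - l) 0 ^ p * NN h v) :=
  ((xr_cont h l (by linarith)).mul (NN_cont h)).integrable_of_hasCompactSupport
    ((xr_hcs h hl (by linarith)).mul_right)

lemma err_le (h : SchwartzMap V3 ℝ) (h0 : ∀ v, 0 ≤ h v) (h1 : ∫ v, h v = 1) {k l p : ℝ} (hk : 0 < k)
    (hkl : k < l) (hp : 3 / 2 < p) :
    ∫ v, max (h v - l) 0 ^ p * NN h v ≤ Kerr k l * ∫ v, max (h v - k) 0 ^ (p + 1) := by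
  set κ := ∫ z, kap1 z with hκ
  have hκ0 : 0 ≤ κ := integral_nonneg kap1_nonneg
  set u : V3 → ℝ := fun v => max (h v - k) 0 ^ (p + 1) with hu
  have hui : Integrable u := xr_int h hk (by linarith)
  have hcvi : Integrable (fun v => ∫ z, kap1 z * u (v - z)) :=
    kap1_int.integrable_convolution (ContinuousLinearMap.mul ℝ ℝ) hui
  have hcv : ∫ v, ∫ z, kap1 z * u (v - z) = κ * ∫ v, u v :=
    integral_convolution (ContinuousLinearMap.mul ℝ ℝ) kap1_int hui
  obtain ⟨C, hC0, hC⟩ := schwartz_bdd h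
  have hk1 : ∀ z, |kap1 z| ≤ kap z := fun z => by
    rw [abs_of_nonneg (kap1_nonneg z)]
    exact indicator_le_self' (fun _ _ => kap_nonneg _) z
  have hxi := xr_int h (hk.trans hkl) (show 0 < p by linarith)
  have pt : ∀ v, max (h v - l) 0 ^ p * NN h v ≤
      (2 + k * κ) * max (h v - l) 0 ^ p + (κ * u v + ∫ z, kap1 z * u (v - z)) := by
    intro v
    have i1 : Integrable (fun z => kap1 z * h (v - z)) := kap_mul_int' h.integrable hC kap1_meas hk1 v
    have i2 : Integrable (fun z => h (v - z)) := h.integrable.comp_sub_left v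
    have n1 : NN h v ≤ 2 + ∫ z, kap1 z * h (v - z) := by
      have : ∫ z, h (v - z) = 1 := by rw [integral_sub_left_eq_self]; exact h1
      calc NN h v ≤ ∫ z, (kap1 z * h (v - z) + 2 * h (v - z)) := by
            refine integral_mono (NN_int h v) (i1.add (i2.const_mul 2)) fun z => ?_
            have := mul_le_mul_of_nonneg_right (kap_le_kap1 z) (h0 (v - z))
            simp only [smul_eq_mul]
            linarith
        _ = _ := by rw [integral_add i1 (i2.const_mul 2), integral_const_mul, this]; ring
    have hx0 : 0 ≤ max (h v - l) 0 := le_max_right _ _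
    have hxp : 0 ≤ max (h v - l) 0 ^ p := by positivity
    have i3 : Integrable (fun z => kap1 z * u (v - z)) := by
      have hub : ∀ w, ‖u w‖ ≤ C ^ (p + 1) := fun w => by
        rw [hu, Real.norm_of_nonneg (by positivity)]
        have : h w ≤ C := (le_abs_self _).trans (hC w)
        exact Real.rpow_le_rpow (le_max_right _ _) (max_le (by linarith) hC0) (by linarith)
      exact kap_mul_int' hui hub kap1_meas hk1 v
    have n2 : max (h v - l) 0 ^ p * ∫ z, kap1 z * h (v - z) ≤
        ∫ z, ((k * max (h v - l) 0 ^ p + u v) * kap1 z + kap1 z * u (v - z)) := by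
      rw [← integral_const_mul]
      refine integral_mono (i1.const_mul _) ((kap1_int.const_mul _).add i3) fun z => ?_
      have hy : h (v - z) ≤ k + max (h (v - z) - k) 0 := by linarith [le_max_left (h (v - z) - k) 0]
      have hyy : max (h v - l) 0 ≤ max (h v - k) 0 := max_le_max (by linarith) le_rfl
      have y1 : max (h v - l) 0 ^ p * max (h (v - z) - k) 0 ≤ u v + u (v - z) := by
        calc max (h v - l) 0 ^ p * max (h (v - z) - k) 0 ≤ max (h v - k) 0 ^ p * max (h (v - z) - k) 0 := by
              gcongr
          _ ≤ _ := young (le_max_right _ _) (le_max_right _ _) (by linarith)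
      have y2 : max (h v - l) 0 ^ p * h (v - z) ≤ k * max (h v - l) 0 ^ p + u v + u (v - z) := by
        nlinarith [mul_le_mul_of_nonneg_left hy hxp]
      have := mul_le_mul_of_nonneg_left y2 (kap1_nonneg z)
      simp only
      linarith
    have hme : ∫ z, ((k * max (h v - l) 0 ^ p + u v) * kap1 z + kap1 z * u (v - z)) =
        (k * max (h v - l) 0 ^ p + u v) * κ + ∫ z, kap1 z * u (v - z) := by
      rw [integral_add (kap1_int.const_mul _) i3, integral_const_mul]
    rw [hme] at n2
    nlinarith [mul_le_mul_of_nonneg_left n1 hxp]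
  have hcomb : Integrable (fun v => κ * u v + ∫ z, kap1 z * u (v - z)) := (hui.const_mul κ).add hcvi
  calc ∫ v, max (h v - l) 0 ^ p * NN h v ≤
      ∫ v, ((2 + k * κ) * max (h v - l) 0 ^ p + (κ * u v + ∫ z, kap1 z * u (v - z))) :=
        integral_mono (err_int h l p (hk.trans hkl) hp) ((hxi.const_mul _).add hcomb) pt
    _ = (2 + k * κ) * (∫ v, max (h v - l) 0 ^ p) + (κ * (∫ v, u v) + κ * ∫ v, u v) := by
        rw [integral_add (hxi.const_mul _) hcomb, integral_add (hui.const_mul κ) hcvi, integral_const_mul,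
          integral_const_mul, hcv]
    _ ≤ (2 + k * κ) * ((l - k)⁻¹ * ∫ v, u v) + (κ * (∫ v, u v) + κ * ∫ v, u v) := by
        gcongr
        rw [← integral_const_mul]
        exact integral_mono hxi (hui.const_mul _) fun v => xp_le hp hkl
    _ = _ := by unfold Kerr; ring


/-- pointwise algebra -/
lemma alg (A : Fin 3 → Fin 3 → ℝ) (hs : ∀ i j, A i j = A j i) (J K xp b b1 b2 χ N d s : ℝ)
    (g a X : Fin 3 → ℝ)
    (hco : ∀ ξ : Fin 3 → ℝ, J * ∑ i, ξ i ^ 2 ≤ ∑ i, ∑ j, A i j * ξ i * ξ j) (hJ : 0 ≤ J)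
    (hb2 : 0 ≤ b2) (hb : 0 ≤ b) (hbx : b ≤ xp) (hK : b1 ^ 2 ≤ K * xp * b2) (hK0 : 0 ≤ K)
    (hz : b2 = 0 → b1 = 0)
    (hχ0 : 0 ≤ χ) (hχ1 : χ ≤ 1) (hA : ∀ i j, |A i j| ≤ N) (ha : ∀ i, |a i| ≤ N) (hX : ∀ i, |X i| ≤ d) :
    -∑ i, (b2 * g i * χ ^ 2 + 2 * b1 * χ * X i) * (∑ j, A i j * g j - s * a i) ≤
      -(1 / 2 * (b2 * χ ^ 2 * (J * ∑ i, g i ^ 2))) +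
        ∑ i, a i * (s * b2 * g i * χ ^ 2 + 2 * (s * b1 - b) * χ * X i) +
        (18 * K * d ^ 2 + 6 * d) * (xp * N) := by
  have hxp : 0 ≤ xp := hb.trans hbx
  have hN : 0 ≤ N := (abs_nonneg _).trans (ha 0)
  have hd : 0 ≤ d := (abs_nonneg _).trans (hX 0)
  set qg := ∑ i, ∑ j, A i j * g i * g j with hqg
  set qX := ∑ i, ∑ j, A i j * X i * X j with hqX
  set m := ∑ i, ∑ j, A i j * X i * g j with hm
  set aX := ∑ i, a i * X i with haX
  have hpos : ∀ ξ : Fin 3 → ℝ, 0 ≤ ∑ i, ∑ j, A i j * ξ i * ξ j := fun ξ =>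
    le_trans (mul_nonneg hJ (Finset.sum_nonneg fun i _ => sq_nonneg _)) (hco ξ)
  have id1 : -∑ i, (b2 * g i * χ ^ 2 + 2 * b1 * χ * X i) * (∑ j, A i j * g j - s * a i) =
      -(b2 * χ ^ 2 * qg) - 2 * b1 * χ * m +
      ∑ i, a i * (s * b2 * g i * χ ^ 2 + 2 * (s * b1 - b) * χ * X i) + 2 * b * χ * aX := by
    simp only [hqg, hm, haX, Fin.sum_univ_three]; ring
  have cross : -(2 * b1 * χ * m) ≤ 1 / 2 * (b2 * χ ^ 2 * qg) + 2 * (K * xp) * qX := by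
    rcases hb2.eq_or_lt with h | h
    · rw [hz h.symm, ← h]
      have := hpos X
      have : 0 ≤ 2 * (K * xp) * qX := by positivity
      simpa using this
    · have h1 := hpos (fun i => b2 * χ * g i + 2 * b1 * X i)
      have h2 : ∑ i, ∑ j, A i j * (b2 * χ * g i + 2 * b1 * X i) * (b2 * χ * g j + 2 * b1 * X j) =
          b2 ^ 2 * χ ^ 2 * qg + 4 * b2 * b1 * χ * m + 4 * b1 ^ 2 * qX := by
        simp only [hqg, hm, hqX, Fin.sum_univ_three]
        rw [hs 1 0, hs 2 0, hs 2 1]; ring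
      rw [h2] at h1
      have h3 : b1 ^ 2 * qX ≤ K * xp * b2 * qX := mul_le_mul_of_nonneg_right hK (hpos X)
      have h4 : 0 ≤ (2 * b2) * (1 / 2 * (b2 * χ ^ 2 * qg) + 2 * (K * xp) * qX + 2 * b1 * χ * m) := by
        nlinarith
      have h5 := nonneg_of_mul_nonneg_right h4 (by positivity)
      linarith
  have hqXle : qX ≤ 9 * d ^ 2 * N := by
    have : ∀ i j, A i j * X i * X j ≤ d ^ 2 * N := fun i j => by
      refine (le_abs_self _).trans ?_
      rw [abs_mul, abs_mul]
      calc |A i j| * |X i| * |X j| ≤ N * d * d := by gcongr; exacts [hA i j, hX i, hX j]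
        _ = _ := by ring
    calc qX ≤ ∑ i : Fin 3, ∑ j : Fin 3, d ^ 2 * N := Finset.sum_le_sum fun i _ => Finset.sum_le_sum fun j _ => this i j
      _ = _ := by simp; ring
  have haXle : aX ≤ 3 * d * N := by
    have : ∀ i, a i * X i ≤ d * N := fun i => by
      refine (le_abs_self _).trans ?_
      rw [abs_mul]
      calc |a i| * |X i| ≤ N * d := by gcongr; exacts [ha i, hX i]
        _ = _ := by ring
    calc aX ≤ ∑ i : Fin 3, d * N := Finset.sum_le_sum fun i _ => this i
      _ = _ := by simp; ring
  have e1 : 2 * b * χ * aX ≤ 6 * d * (xp * N) := by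
    have : b * χ ≤ xp := by nlinarith
    calc 2 * b * χ * aX = 2 * ((b * χ) * aX) := by ring
      _ ≤ 2 * ((b * χ) * (3 * d * N)) := by gcongr
      _ ≤ 2 * (xp * (3 * d * N)) := by gcongr
      _ = _ := by ring
  have e2 : 2 * (K * xp) * qX ≤ 18 * K * d ^ 2 * (xp * N) := by
    calc 2 * (K * xp) * qX ≤ 2 * (K * xp) * (9 * d ^ 2 * N) := by gcongr
      _ = _ := by ring
  have e3 : b2 * χ ^ 2 * (J * ∑ i, g i ^ 2) ≤ b2 * χ ^ 2 * qg := by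
    have := hco g
    gcongr
  rw [id1]
  nlinarith

lemma pd_ibp {ψ F : V3 → ℝ} (hψ : ContDiff ℝ 1 ψ) (hc : HasCompactSupport ψ) (hF : ContDiff ℝ 1 F) (i : Fin 3) :
    ∫ v, ψ v * pd i F v = -∫ v, pd i ψ v * F v := by
  refine integral_mul_fderiv_eq_neg_fderiv_mul_of_integrable ?_ ?_ ?_ (fun v _ => hψ.differentiable (by norm_num) v)
    (fun v _ => hF.differentiable (by norm_num) v)
  · exact ((pd_continuous hψ i).mul hF.continuous).integrable_of_hasCompactSupport (pd_hcs hc i).mul_right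
  · exact (hψ.continuous.mul (pd_continuous hF i)).integrable_of_hasCompactSupport hc.mul_right
  · exact (hψ.continuous.mul hF.continuous).integrable_of_hasCompactSupport hc.mul_right

lemma pd_comp_mul_sq {g χ : V3 → ℝ} {β : ℝ → ℝ} {β' : ℝ} {v : V3} (hβ : HasDerivAt β β' (g v))
    (hg : DifferentiableAt ℝ g v) (hχ : DifferentiableAt ℝ χ v) (i : Fin 3) :
    pd i (fun w => β (g w) * χ w ^ 2) v = β' * pd i g v * χ v ^ 2 + 2 * β (g v) * χ v * pd i χ v := by
  have h1 : HasFDerivAt (fun w => β (g w)) (β' • fderiv ℝ g v) v := hβ.comp_hasFDerivAt v hg.hasFDerivAt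
  have h2 := h1.mul (hχ.hasFDerivAt.pow 2)
  unfold pd
  have : fderiv ℝ (fun w => β (g w) * χ w ^ 2) v = _ := h2.fderiv
  rw [this]
  simp
  ring

def Kpp (p : ℝ) : ℝ := (p + 1) ^ 2 / (p * (p - 1))

lemma c1_of_hasDeriv {β β' : ℝ → ℝ} (h : ∀ s, HasDerivAt β (β' s) s) (hc : Continuous β') : ContDiff ℝ 1 β := by
  rw [contDiff_one_iff_deriv]
  refine ⟨fun s => (h s).differentiableAt, ?_⟩
  rwa [show deriv β = β' from funext fun s => (h s).deriv]

lemma fixed_time {p ε k l c d : ℝ} (hp : 3 / 2 < p) (hε : 0 < ε) (hk : 0 < k) (hkl : k < l) (hc : 0 ≤ c)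
    (h : SchwartzMap V3 ℝ) (h0 : ∀ v, 0 ≤ h v) (h1 : ∫ v, h v = 1)
    (hco : ∀ v ξ : V3, c * jap v ^ (-(3 : ℝ)) * ‖ξ‖ ^ 2 ≤ ∑ i, ∑ j, coeffA h v i j * ξ i * ξ j)
    {χ : V3 → ℝ} (hχ : ContDiff ℝ 1 χ) (hχc : HasCompactSupport χ) (hχ0 : ∀ v, 0 ≤ χ v)
    (hχ1 : ∀ v, χ v ≤ 1) (hχd : ∀ i v, |pd i χ v| ≤ d) :
    (∫ v, be1 p ε l (h v) * χ v ^ 2 * ∑ i, pd i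
      (fun w => (∑ j : Fin 3, coeffA h w i j * pd j h w) - h w * pd i (coeffa h) w) v) +
      c / 2 * (p * (p - 1)) * ∫ v, χ v ^ 2 * (max (h v - l) 0 ^ (p - 1) / (max (h v - l) 0 + ε)) *
        (jap v ^ (-(3 : ℝ)) * ∑ i, pd i h v ^ 2) ≤
    ((p + 1) * (2 + 2 * (l ^ 2 / (l - k) ^ 2)) + (18 * Kpp p * d ^ 2 + 6 * d) * Kerr k l) *
      ∫ v, max (h v - k) 0 ^ (p + 1) := by
  have hd : 0 ≤ d := (abs_nonneg _).trans (hχd 0 0)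
  have hp1 : 0 < p := by linarith
  have hp2 : 0 < p - 1 := by linarith
  have hK0 : 0 ≤ Kpp p := by unfold Kpp; positivity
  have hh : ContDiff ℝ 1 h := h.smooth 1
  have hhd := hh.differentiable (by norm_num : (1 : WithTop ℕ∞) ≠ 0)
  have hχdf := hχ.differentiable (by norm_num : (1 : WithTop ℕ∞) ≠ 0)
  set F : Fin 3 → V3 → ℝ := fun i w => (∑ j : Fin 3, coeffA h w i j * pd j h w) - h w * pd i (coeffa h) w with hF
  have hpdh : ∀ j, ContDiff ℝ 1 (pd j h) := fun j => (spd j h).smooth 1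
  have hpda : ∀ j, ContDiff ℝ 1 (pd j (coeffa h)) := fun j => by
    have : pd j (coeffa h) = fun v => -((4 * π)⁻¹ * cv (k2 j) h v) := funext fun v => pd_coeffa h j v
    rw [this]
    exact (contDiff_const.mul (by exact_mod_cast cv_contDiff 1 h (k2_meas j) (k2_le j))).neg
  have hFc : ∀ i, ContDiff ℝ 1 (F i) := fun i =>
    (ContDiff.sum fun j _ => (coeffA_contDiff h i j).mul (hpdh j)).sub (hh.mul (hpda i))
  have cb1 : ContDiff ℝ 1 (be1 p ε l) := c1_of_hasDeriv (be1_hasDeriv hp hε l) (be2_cont hp hε l)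
  have cG : ContDiff ℝ 1 (fun s => s * be1 p ε l s - be p ε l s) :=
    c1_of_hasDeriv (G_hasDeriv hp hε l) (continuous_id.mul (be2_cont hp hε l))
  have hχ2c : HasCompactSupport (fun v => χ v ^ 2) := by
    exact hχc.comp_left (g := fun x : ℝ => x ^ 2) (by simp)
  set ψ : V3 → ℝ := fun v => be1 p ε l (h v) * χ v ^ 2 with hψ
  have hψC : ContDiff ℝ 1 ψ := (cb1.comp hh).mul (hχ.pow 2)
  have hψc : HasCompactSupport ψ := hχ2c.mul_left
  set Ψ : V3 → ℝ := fun v => (h v * be1 p ε l (h v) - be p ε l (h v)) * χ v ^ 2 with hΨ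
  have hΨC : ContDiff ℝ 1 Ψ := (cG.comp hh).mul (hχ.pow 2)
  have hΨc : HasCompactSupport Ψ := hχ2c.mul_left
  have ibp : ∫ v, ψ v * ∑ i, pd i (F i) v = ∫ v, -∑ i, pd i ψ v * F i v := by
    have j1 : ∀ i, Integrable (fun v => pd i ψ v * F i v) := fun i =>
      ((pd_continuous hψC i).mul (hFc i).continuous).integrable_of_hasCompactSupport (pd_hcs hψc i).mul_right
    have j2 : ∀ i, Integrable (fun v => ψ v * pd i (F i) v) := fun i =>
      (hψC.continuous.mul (pd_continuous (hFc i) i)).integrable_of_hasCompactSupport hψc.mul_right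
    rw [integral_neg, integral_finsetSum _ fun i _ => j1 i]
    simp_rw [Finset.mul_sum]
    rw [integral_finsetSum _ fun i _ => j2 i, ← Finset.sum_neg_distrib]
    exact Finset.sum_congr rfl fun i _ => pd_ibp hψC hψc (hFc i) i
  set D : V3 → ℝ := fun v => χ v ^ 2 * (max (h v - l) 0 ^ (p - 1) / (max (h v - l) 0 + ε)) *
        (jap v ^ (-(3 : ℝ)) * ∑ i, pd i h v ^ 2) with hD
  have hDc : Continuous D := by
    have e1 := h.continuous
    have e2 := hχ.continuous
    have e3 : ∀ j, Continuous (pd j h) := fun j => (hpdh j).continuous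
    have e4 : Continuous jap := by unfold jap; fun_prop
    have e5 : Continuous fun v => jap v ^ (-(3 : ℝ)) := e4.rpow_const fun v => Or.inl (jap_pos v).ne'
    have e6 := xr_cont h l hp2
    refine ((e2.pow 2).mul (e6.div (by fun_prop) fun v => ?_)).mul (e5.mul (by fun_prop))
    have : 0 ≤ max (h v - l) 0 := le_max_right _ _
    positivity
  have hDi : Integrable D := hDc.integrable_of_hasCompactSupport (hχ2c.mul_right.mul_right)
  have pt : ∀ v, -∑ i, pd i ψ v * F i v ≤ -(c / 2 * (p * (p - 1)) * D v) +
      (∑ i, pd i (coeffa h) v * pd i Ψ v +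
      (18 * Kpp p * d ^ 2 + 6 * d) * (max (h v - l) 0 ^ p * NN h v)) := by
    intro v
    have e1 : ∀ i, pd i ψ v = be2 p ε l (h v) * pd i h v * χ v ^ 2 + 2 * be1 p ε l (h v) * χ v * pd i χ v :=
      fun i => pd_comp_mul_sq (be1_hasDeriv hp hε l (h v)) (hhd v) (hχdf v) i
    have e2 : ∀ i, pd i Ψ v = h v * be2 p ε l (h v) * pd i h v * χ v ^ 2 +
        2 * (h v * be1 p ε l (h v) - be p ε l (h v)) * χ v * pd i χ v :=
      fun i => pd_comp_mul_sq (β := fun s => s * be1 p ε l s - be p ε l s) (G_hasDeriv hp hε l (h v)) (hhd v) (hχdf v) i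
    simp_rw [e1, e2]
    have hJ : 0 ≤ c * jap v ^ (-(3 : ℝ)) := mul_nonneg hc (Real.rpow_nonneg (jap_pos v).le _)
    have main := alg (coeffA h v) (fun i j => coeffA_symm h i j v) (c * jap v ^ (-(3 : ℝ))) (Kpp p)
      (max (h v - l) 0 ^ p) (be p ε l (h v)) (be1 p ε l (h v)) (be2 p ε l (h v)) (χ v) (NN h v) d (h v)
      (fun i => pd i h v) (fun i => pd i (coeffa h) v) (fun i => pd i χ v)
      (fun ξ => by
        have := hco v (WithLp.toLp 2 ξ)
        rw [EuclideanSpace.real_norm_sq_eq] at this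
        exact this) hJ (be2_nonneg hp hε l _) (be_nonneg hp hε l _) (be_le hp hε l _) (be1_sq hp hε l _) hK0
      (be1_zero_of_be2 hp hε l _) (hχ0 v) (hχ1 v) (coeffA_le h h0 v) (pda_le h h0 v) (fun i => hχd i v)
    refine main.trans ?_
    have hge := be2_ge hp hε l (h v)
    have hg0 : 0 ≤ χ v ^ 2 * (c * jap v ^ (-(3 : ℝ)) * ∑ i, pd i h v ^ 2) :=
      mul_nonneg (sq_nonneg _) (mul_nonneg hJ (Finset.sum_nonneg fun i _ => sq_nonneg _))
    have := mul_le_mul_of_nonneg_right hge hg0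
    simp only [hD]
    linarith
  have i1 : Integrable (fun v => ∑ i, pd i (coeffa h) v * pd i Ψ v) := integrable_finsetSum _ fun i _ =>
    ((hpda i).continuous.mul (pd_continuous hΨC i)).integrable_of_hasCompactSupport (pd_hcs hΨc i).mul_left
  have i2 := err_int h l p (hk.trans hkl) hp
  have i12 : Integrable (fun v => ∑ i, pd i (coeffa h) v * pd i Ψ v +
      (18 * Kpp p * d ^ 2 + 6 * d) * (max (h v - l) 0 ^ p * NN h v)) := i1.add (i2.const_mul _)
  have i0 : Integrable (fun v => -∑ i, pd i ψ v * F i v) := (integrable_finsetSum _ fun i _ =>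
      ((pd_continuous hψC i).mul (hFc i).continuous).integrable_of_hasCompactSupport (pd_hcs hψc i).mul_right).neg
  have i3 : Integrable (fun v => -(c / 2 * (p * (p - 1)) * D v)) := (hDi.const_mul _).neg
  have step := integral_mono i0 (i3.add i12) pt
  have hsum : ∫ v, (-(c / 2 * (p * (p - 1)) * D v) + (∑ i, pd i (coeffa h) v * pd i Ψ v +
      (18 * Kpp p * d ^ 2 + 6 * d) * (max (h v - l) 0 ^ p * NN h v))) =
      -(c / 2 * (p * (p - 1)) * ∫ v, D v) + ((∫ v, h v * Ψ v) +
      (18 * Kpp p * d ^ 2 + 6 * d) * ∫ v, (max (h v - l) 0 ^ p * NN h v)) := by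
    rw [integral_add i3 i12, integral_add i1 (i2.const_mul _), integral_neg, integral_const_mul, integral_const_mul,
      gauss_weak h Ψ hΨC hΨc]
  have step2 : ∫ v, -∑ i, pd i ψ v * F i v ≤ -(c / 2 * (p * (p - 1)) * ∫ v, D v) + ((∫ v, h v * Ψ v) +
      (18 * Kpp p * d ^ 2 + 6 * d) * ∫ v, (max (h v - l) 0 ^ p * NN h v)) := by
    rw [← hsum]; exact step
  have s3 : ∫ v, h v * Ψ v ≤ (p + 1) * (2 + 2 * (l ^ 2 / (l - k) ^ 2)) * ∫ v, max (h v - k) 0 ^ (p + 1) := by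
    rw [← integral_const_mul]
    refine integral_mono ((h.continuous.mul hΨC.continuous).integrable_of_hasCompactSupport hΨc.mul_left)
      ((xr_int h hk (by linarith)).const_mul _) fun v => ?_
    have a1 := sG_le hp hε (h0 v) hk hkl
    have a2 : 0 ≤ (p + 1) * (2 + 2 * (l ^ 2 / (l - k) ^ 2)) * max (h v - k) 0 ^ (p + 1) := by
      have : 0 ≤ max (h v - k) 0 := le_max_right _ _
      positivity
    have a3 : χ v ^ 2 ≤ 1 := pow_le_one₀ (hχ0 v) (hχ1 v)
    have a4 := sq_nonneg (χ v)
    simp only [hΨ]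
    calc h v * ((h v * be1 p ε l (h v) - be p ε l (h v)) * χ v ^ 2) =
        h v * (h v * be1 p ε l (h v) - be p ε l (h v)) * χ v ^ 2 := by ring
      _ ≤ (p + 1) * (2 + 2 * (l ^ 2 / (l - k) ^ 2)) * max (h v - k) 0 ^ (p + 1) * χ v ^ 2 := by gcongr
      _ ≤ _ := mul_le_of_le_one_right a2 a3
  have s4 := mul_le_mul_of_nonneg_left (err_le h h0 h1 hk hkl hp)
    (show 0 ≤ 18 * Kpp p * d ^ 2 + 6 * d by positivity)
  rw [ibp]
  linarith


lemma cutoff : ∃ d : ℝ, 0 ≤ d ∧ ∀ n : ℕ, ∃ χ : V3 → ℝ, ContDiff ℝ 1 χ ∧ HasCompactSupport χ ∧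
    (∀ v, 0 ≤ χ v) ∧ (∀ v, χ v ≤ 1) ∧ (∀ i v, |pd i χ v| ≤ d / (n + 1)) ∧ ∀ v, ‖v‖ ≤ n + 1 → χ v = 1 := by
  let b : ContDiffBump (0 : V3) := ⟨1, 2, one_pos, one_lt_two⟩
  have hb : ContDiff ℝ 1 b := b.contDiff
  have hbc : HasCompactSupport b := b.hasCompactSupport
  have h1 : ∀ i, ∃ C, ∀ v, ‖pd i b v‖ ≤ C := fun i =>
    (pd_continuous hb i).bounded_above_of_compact_support (pd_hcs hbc i)
  choose C hC using h1
  have hC0 : ∀ i, 0 ≤ C i := fun i => (norm_nonneg _).trans (hC i 0)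
  refine ⟨∑ i, C i, Finset.sum_nonneg fun i _ => hC0 i, fun n => ?_⟩
  have hn : (0 : ℝ) < n + 1 := by positivity
  set r : ℝ := ((n : ℝ) + 1)⁻¹ with hr
  have hr0 : 0 < r := by positivity
  refine ⟨fun v => b (r • v), hb.comp (contDiff_const_smul r), ?_, fun v => b.nonneg, fun v => b.le_one, ?_, ?_⟩
  · exact hbc.comp_homeomorph (Homeomorph.smulOfNeZero r hr0.ne')
  · intro i v
    have hd : HasFDerivAt b (fderiv ℝ b (r • v)) (r • v) :=
      (hb.differentiable (by norm_num) _).hasFDerivAt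
    have h2 : HasFDerivAt (fun v : V3 => r • v) (r • ContinuousLinearMap.id ℝ V3) v :=
      (hasFDerivAt_id v).const_smul r
    have h3 := hd.comp v h2
    have h4 : pd i (fun v => b (r • v)) v = r * pd i b (r • v) := by
      unfold pd
      have : fderiv ℝ (fun v => b (r • v)) v = _ := h3.fderiv
      rw [this]; simp
    rw [h4, abs_mul, abs_of_pos hr0, div_eq_inv_mul]
    gcongr
    exact (hC i _).trans (Finset.single_le_sum (fun i _ => hC0 i) (Finset.mem_univ i))
  · intro v hv
    apply b.one_of_mem_closedBall
    simp only [mem_closedBall_zero_iff, norm_smul, Real.norm_eq_abs, abs_of_pos hr0]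
    show r * ‖v‖ ≤ 1
    rw [hr, inv_mul_le_one₀ hn]; exact hv

section
variable {T : ℝ} {f : ℝ → V3 → ℝ}

lemma U_open : IsOpen (Ioo (0 : ℝ) T ×ˢ (univ : Set V3)) := isOpen_Ioo.prod isOpen_univ

variable (hU : ContDiffOn ℝ 1 (fun q : ℝ × V3 => f q.1 q.2) (Ioo (0 : ℝ) T ×ˢ (univ : Set V3)))
include hU

lemma fU_hasFDerivAt {t : ℝ} (ht : t ∈ Ioo 0 T) (v : V3) :
    HasFDerivAt (fun q : ℝ × V3 => f q.1 q.2) (fderiv ℝ (fun q : ℝ × V3 => f q.1 q.2) (t, v)) (t, v) :=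
  ((hU.differentiableOn (by norm_num)).differentiableAt (U_open.mem_nhds ⟨ht, mem_univ v⟩)).hasFDerivAt

lemma f_t_deriv {t : ℝ} (ht : t ∈ Ioo 0 T) (v : V3) :
    HasDerivAt (fun s => f s v) (fderiv ℝ (fun q : ℝ × V3 => f q.1 q.2) (t, v) (1, 0)) t := by
  have h2 : HasDerivAt (fun s : ℝ => (s, v)) ((1 : ℝ), (0 : V3)) t :=
    (hasDerivAt_id t).prodMk (hasDerivAt_const t v)
  exact (fU_hasFDerivAt hU ht v).comp_hasDerivAt t h2

lemma f_v_deriv {t : ℝ} (ht : t ∈ Ioo 0 T) (v : V3) (i : Fin 3) :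
    pd i (f t) v = fderiv ℝ (fun q : ℝ × V3 => f q.1 q.2) (t, v) (0, EuclideanSpace.single i 1) := by
  have h2 : HasFDerivAt (fun w : V3 => (t, w)) (ContinuousLinearMap.inr ℝ ℝ V3) v :=
    (hasFDerivAt_const t v).prodMk (hasFDerivAt_id v)
  have h3 := (fU_hasFDerivAt hU ht v).comp v h2
  unfold pd
  have : fderiv ℝ (f t) v = _ := h3.fderiv
  rw [this]; simp

lemma f_contOn : ContinuousOn (fun q : ℝ × V3 => f q.1 q.2) (Ioo (0 : ℝ) T ×ˢ (univ : Set V3)) := hU.continuousOn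

lemma df_contOn (w : ℝ × V3) : ContinuousOn (fun q : ℝ × V3 => fderiv ℝ (fun q : ℝ × V3 => f q.1 q.2) q w)
    (Ioo (0 : ℝ) T ×ˢ (univ : Set V3)) :=
  (hU.continuousOn_fderiv_of_isOpen U_open le_rfl).clm_apply continuousOn_const

lemma slice_cont {g : ℝ × V3 → ℝ} (hg : ContinuousOn g (Ioo (0 : ℝ) T ×ˢ (univ : Set V3))) {t : ℝ}
    (ht : t ∈ Ioo 0 T) : Continuous fun v => g (t, v) := by
  have : Continuous fun v : V3 => (t, v) := by fun_prop
  exact hg.comp_continuous this fun v => ⟨ht, mem_univ v⟩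

lemma e_deriv {β β' : ℝ → ℝ} (hβ : ∀ s, HasDerivAt β (β' s) s) (hβc : Continuous β') {χ : V3 → ℝ}
    (hχ : Continuous χ) (hχc : HasCompactSupport χ) {t : ℝ} (ht : t ∈ Ioo 0 T) :
    HasDerivAt (fun s => ∫ v, β (f s v) * χ v ^ 2)
      (∫ v, β' (f t v) * χ v ^ 2 * deriv (fun s => f s v) t) t := by
  have hβ0 : Continuous β := continuous_iff_continuousAt.2 fun s => (hβ s).continuousAt
  set G : ℝ × V3 → ℝ := fun q => β' (f q.1 q.2) * χ q.2 ^ 2 * fderiv ℝ (fun q : ℝ × V3 => f q.1 q.2) q (1, 0) with hG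
  have hGc : ContinuousOn G (Ioo (0 : ℝ) T ×ˢ (univ : Set V3)) :=
    ((hβc.comp_continuousOn (f_contOn hU)).mul (by fun_prop)).mul (df_contOn hU _)
  have hG0 : ContinuousOn (fun q : ℝ × V3 => β (f q.1 q.2) * χ q.2 ^ 2) (Ioo (0 : ℝ) T ×ˢ (univ : Set V3)) :=
    ((hβ0.comp_continuousOn (f_contOn hU)).mul (by fun_prop))
  obtain ⟨r, hr, hrs⟩ := Metric.nhds_basis_closedBall.mem_iff.1 (isOpen_Ioo.mem_nhds ht)
  have hcomp : IsCompact (Metric.closedBall t r ×ˢ tsupport χ) := (isCompact_closedBall t r).prod hχc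
  obtain ⟨B, hB⟩ := hcomp.exists_bound_of_continuousOn (hGc.mono (prod_mono hrs (subset_univ _)))
  have h0 : ∀ v, v ∉ tsupport χ → χ v = 0 := fun v hv => image_eq_zero_of_notMem_tsupport hv
  have hχ2c : HasCompactSupport (fun v => χ v ^ 2) := by
    exact hχc.comp_left (g := fun x : ℝ => x ^ 2) (by simp)
  have key := hasDerivAt_integral_of_dominated_loc_of_deriv_le (μ := (volume : Measure V3)) (𝕜 := ℝ)
    (F := fun s v => β (f s v) * χ v ^ 2) (F' := fun s v => G (s, v)) (x₀ := t)
    (s := Metric.closedBall t r) (bound := (tsupport χ).indicator fun _ => |B|)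
    (Metric.closedBall_mem_nhds t hr) ?_ ?_ ?_ ?_ ?_ ?_
  · refine key.2.congr_deriv (integral_congr_ae (ae_of_all _ fun v => ?_))
    simp only [hG, (f_t_deriv hU ht v).deriv]
  · filter_upwards [isOpen_Ioo.mem_nhds ht] with s hs
    exact (slice_cont hU hG0 hs).aestronglyMeasurable
  · exact (slice_cont hU hG0 ht).integrable_of_hasCompactSupport hχ2c.mul_left
  · exact (slice_cont hU hGc ht).aestronglyMeasurable
  · refine ae_of_all _ fun v s hs => ?_
    by_cases hv : v ∈ tsupport χ
    · rw [indicator_of_mem hv]; exact (hB (s, v) ⟨hs, hv⟩).trans (le_abs_self B)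
    · rw [indicator_of_notMem hv]; simp [hG, h0 v hv]
  · rw [integrable_indicator_iff (isClosed_tsupport χ).measurableSet]
    exact integrableOn_const (hχc.measure_lt_top (μ := volume)).ne
  · refine ae_of_all _ fun v s hs => ?_
    have h2 := ((hβ (f s v)).comp s (f_t_deriv hU (hrs hs) v)).mul_const (χ v ^ 2)
    refine h2.congr_deriv ?_
    simp only [hG]; ring

def DD (p ε l : ℝ) (χ : V3 → ℝ) (g : V3 → ℝ) (v : V3) : ℝ :=
  χ v ^ 2 * (max (g v - l) 0 ^ (p - 1) / (max (g v - l) 0 + ε)) * (jap v ^ (-(3 : ℝ)) * ∑ i, pd i g v ^ 2)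

lemma DD_cont {p ε l : ℝ} (hp : 3 / 2 < p) (hε : 0 < ε) {χ : V3 → ℝ} (hχ : Continuous χ) :
    ContinuousOn (fun q : ℝ × V3 => DD p ε l χ (f q.1) q.2) (Ioo (0 : ℝ) T ×ˢ (univ : Set V3)) := by
  have e4 : Continuous jap := by unfold jap; fun_prop
  have e5 : Continuous fun q : ℝ × V3 => jap q.2 ^ (-(3 : ℝ)) :=
    (e4.comp continuous_snd).rpow_const fun q => Or.inl (jap_pos q.2).ne'
  have e3 : ∀ i, ContinuousOn (fun q : ℝ × V3 => pd i (f q.1) q.2) (Ioo (0 : ℝ) T ×ˢ (univ : Set V3)) :=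
    fun i => (df_contOn hU (0, EuclideanSpace.single i 1)).congr fun q hq => f_v_deriv hU hq.1 q.2 i
  have e1 : Continuous fun s : ℝ => max (s - l) 0 ^ (p - 1) / (max (s - l) 0 + ε) := by
    refine Continuous.div (Continuous.rpow_const (by fun_prop) fun _ => Or.inr (by linarith)) (by fun_prop) fun s => ?_
    have : 0 ≤ max (s - l) 0 := le_max_right _ _
    positivity
  exact (ContinuousOn.mul (by fun_prop) (e1.comp_continuousOn (f_contOn hU))).mul
    (e5.continuousOn.mul (continuousOn_finsetSum _ fun i _ => (e3 i).pow 2))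

lemma DDint_cont {p ε l : ℝ} (hp : 3 / 2 < p) (hε : 0 < ε) {χ : V3 → ℝ} (hχ : Continuous χ)
    (hχc : HasCompactSupport χ) : ContinuousOn (fun t => ∫ v, DD p ε l χ (f t) v) (Ioo 0 T) := by
  refine continuousOn_integral_of_compact_support (k := tsupport χ) hχc (DD_cont hU hp hε hχ) ?_
  intro t v _ hv
  simp [DD, image_eq_zero_of_notMem_tsupport hv]

lemma DD_int {p ε l : ℝ} (hp : 3 / 2 < p) (hε : 0 < ε) {χ : V3 → ℝ} (hχ : Continuous χ)
    (hχc : HasCompactSupport χ) {t : ℝ} (ht : t ∈ Ioo 0 T) : Integrable (DD p ε l χ (f t)) := by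
  refine (slice_cont hU (DD_cont hU hp hε hχ) ht).integrable_of_hasCompactSupport ?_
  refine HasCompactSupport.intro hχc fun v hv => ?_
  simp [DD, image_eq_zero_of_notMem_tsupport hv]

lemma Y_meas {k r : ℝ} (hr : 0 < r) :
    AEStronglyMeasurable (fun t => ∫ v, max (f t v - k) 0 ^ r) (volume.restrict (Ioo 0 T)) := by
  have h1 : Continuous fun s : ℝ => max (s - k) 0 ^ r :=
    Continuous.rpow_const (by fun_prop) fun _ => Or.inr hr.le
  have h2 : ContinuousOn (fun q : ℝ × V3 => max (f q.1 q.2 - k) 0 ^ r) (Ioo (0 : ℝ) T ×ˢ (univ : Set V3)) :=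
    h1.comp_continuousOn (f_contOn hU)
  have h3 := h2.aestronglyMeasurable (μ := (volume : Measure ℝ).prod (volume : Measure V3))
    (measurableSet_Ioo.prod MeasurableSet.univ)
  rw [← Measure.prod_restrict, Measure.restrict_univ] at h3
  exact h3.integral_prod_right'
end

lemma DD_nonneg {p ε l : ℝ} (hε : 0 < ε) (χ g : V3 → ℝ) (v : V3) : 0 ≤ DD p ε l χ g v := by
  unfold DD
  have h1 : 0 ≤ max (g v - l) 0 := le_max_right _ _
  have h2 := jap_pos v
  have h3 : 0 ≤ ∑ i, pd i g v ^ 2 := Finset.sum_nonneg fun i _ => sq_nonneg _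
  positivity


lemma time_ineq {T : ℝ} {f : ℝ → V3 → ℝ}
    (hU : ContDiffOn ℝ 1 (fun q : ℝ × V3 => f q.1 q.2) (Ioo (0 : ℝ) T ×ˢ (univ : Set V3)))
    (h0 : ∀ t v, 0 ≤ f t v) (hS : ∀ t ∈ Ioo 0 T, IsSchwartz (f t)) (hE : ∀ t ∈ Ioo 0 T, ∀ v, LandauEqAt f t v)
    (h1 : ∀ t ∈ Ioo 0 T, ∫ v, f t v = 1) {c : ℝ} (hc : 0 < c)
    (hco : ∀ t ∈ Ioo 0 T, ∀ v ξ : V3, c * jap v ^ (-(3 : ℝ)) * ‖ξ‖ ^ 2 ≤ ∑ i, ∑ j, coeffA (f t) v i j * ξ i * ξ j)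
    {p k l : ℝ} (hp : 3 / 2 < p) (hk : 0 < k) (hkl : k < l)
    {T₁ T₂ T₃ : ℝ} (hT1 : 0 ≤ T₁) (hT12 : T₁ < T₂) (hT3 : T₃ ≤ T)
    (hA : (∫⁻ t in Ioo T₁ T₃, ∫⁻ v : V3, ENNReal.ofReal (max (f t v - k) 0 ^ (p + 1))) ≠ ⊤)
    {ε d : ℝ} (hε : 0 < ε) {χ : V3 → ℝ} (hχ : ContDiff ℝ 1 χ) (hχc : HasCompactSupport χ) (hχ0 : ∀ v, 0 ≤ χ v)
    (hχ1 : ∀ v, χ v ≤ 1) (hχd : ∀ i v, |pd i χ v| ≤ d) {t : ℝ} (ht : t ∈ Ioo T₂ T₃) :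
    (∫ v, be p ε l (f t v) * χ v ^ 2) + c / 2 * (p * (p - 1)) * ∫ τ in T₂..t, ∫ v, DD p ε l χ (f τ) v ≤
      (1 / ((T₂ - T₁) * (l - k)) +
      ((p + 1) * (2 + 2 * (l ^ 2 / (l - k) ^ 2)) + (18 * Kpp p * d ^ 2 + 6 * d) * Kerr k l)) *
      (∫⁻ t in Ioo T₁ T₃, ∫⁻ v : V3, ENNReal.ofReal (max (f t v - k) 0 ^ (p + 1))).toReal := by
  have hd : 0 ≤ d := (abs_nonneg _).trans (hχd 0 0)
  have hp1 : 0 < p := by linarith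
  have hp2 : 0 < p - 1 := by linarith
  have hlk : 0 < l - k := by linarith
  have hT21 : 0 < T₂ - T₁ := by linarith
  set K : ℝ := (p + 1) * (2 + 2 * (l ^ 2 / (l - k) ^ 2)) + (18 * Kpp p * d ^ 2 + 6 * d) * Kerr k l with hK
  have hK0 : 0 ≤ K := by
    have := Kerr_nonneg hk hkl
    have : 0 ≤ Kpp p := by unfold Kpp; positivity
    positivity
  set Y : ℝ → ℝ := fun τ => ∫ v, max (f τ v - k) 0 ^ (p + 1) with hY
  have hpt : ∀ τ v, 0 ≤ max (f τ v - k) 0 ^ (p + 1) := fun τ v => Real.rpow_nonneg (le_max_right _ _) _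
  have hY0 : ∀ τ, 0 ≤ Y τ := fun τ => integral_nonneg (hpt τ)
  have hsub : Ioo T₁ T₃ ⊆ Ioo 0 T := Ioo_subset_Ioo hT1 hT3
  have hYl : ∀ τ ∈ Ioo T₁ T₃, ∫⁻ v : V3, ENNReal.ofReal (max (f τ v - k) 0 ^ (p + 1)) = ENNReal.ofReal (Y τ) := by
    intro τ hτ
    obtain ⟨h, hh⟩ := hS τ (hsub hτ)
    rw [hY]; simp only
    rw [ofReal_integral_eq_lintegral_ofReal _ (ae_of_all _ (hpt τ))]
    rw [← hh]; exact xr_int h hk (by linarith)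
  have hAe := setLIntegral_congr_fun (μ := volume) measurableSet_Ioo hYl
  rw [hAe] at hA ⊢
  have hYm : AEStronglyMeasurable Y (volume.restrict (Ioo T₁ T₃)) :=
    (Y_meas hU (by linarith)).mono_measure (Measure.restrict_mono hsub le_rfl)
  have hYi : IntegrableOn Y (Ioo T₁ T₃) := by
    refine ⟨hYm, ?_⟩
    rw [hasFiniteIntegral_iff_ofReal (ae_of_all _ hY0)]
    exact hA.lt_top
  have hYA : (∫⁻ τ in Ioo T₁ T₃, ENNReal.ofReal (Y τ)).toReal = ∫ τ in Ioo T₁ T₃, Y τ :=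
    (integral_eq_lintegral_of_nonneg_ae (ae_of_all _ hY0) hYm).symm
  rw [hYA]
  set A := ∫ τ in Ioo T₁ T₃, Y τ with hAdef
  have hmono : ∀ S ⊆ Ioo T₁ T₃, ∫ τ in S, Y τ ≤ A := fun S hS =>
    setIntegral_mono_set hYi (ae_of_all _ hY0) (HasSubset.Subset.eventuallyLE hS)
  have h23 : T₂ < T₃ := ht.1.trans ht.2
  obtain ⟨s, hs, hsY⟩ := exists_le_setAverage (μ := volume) (s := Ioo T₁ T₂) (f := Y)
    (by simp [hT12]) (by simp) (hYi.mono_set (Ioo_subset_Ioo_right h23.le))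
  have hsY' : Y s ≤ (T₂ - T₁)⁻¹ * A := by
    refine hsY.trans ?_
    rw [setAverage_eq, Real.volume_real_Ioo_of_le hT12.le, smul_eq_mul]
    gcongr
    exact hmono _ (Ioo_subset_Ioo_right h23.le)
  have hst : s < t := hs.2.trans ht.1
  have hIcc : Icc s t ⊆ Ioo 0 T := fun τ hτ =>
    ⟨by linarith [hs.1, hτ.1], by linarith [ht.2, hτ.2]⟩
  have hIcc' : Icc s t ⊆ Ioo T₁ T₃ := fun τ hτ =>
    ⟨by linarith [hs.1, hτ.1], by linarith [ht.2, hτ.2]⟩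
  set E : ℝ → ℝ := fun τ => ∫ v, be p ε l (f τ v) * χ v ^ 2 with hEdef
  set D : ℝ → ℝ := fun τ => ∫ v, DD p ε l χ (f τ) v with hD
  have hD0 : ∀ τ, 0 ≤ D τ := fun τ => integral_nonneg fun v => DD_nonneg hε χ (f τ) v
  have hDc : ContinuousOn D (Ioo 0 T) := DDint_cont hU hp hε hχ.continuous hχc
  have hEd : ∀ τ ∈ Ioo 0 T, HasDerivAt E (∫ v, be1 p ε l (f τ v) * χ v ^ 2 * deriv (fun s => f s v) τ) τ :=
    fun τ hτ => e_deriv hU (be_hasDeriv hp hε l)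
      (continuous_iff_continuousAt.2 fun s => (be1_hasDeriv hp hε l s).continuousAt) hχ.continuous hχc hτ
  have hDi : IntegrableOn D (Icc s t) := (hDc.mono hIcc).integrableOn_Icc
  have hYi' : IntegrableOn Y (Icc s t) := hYi.mono_set hIcc'
  set c0 := c / 2 * (p * (p - 1)) with hc0
  have hc0p : 0 < c0 := by positivity
  have key := intervalIntegral.sub_le_integral_of_hasDeriv_right_of_le (g := E)
    (g' := fun τ => ∫ v, be1 p ε l (f τ v) * χ v ^ 2 * deriv (fun s => f s v) τ)
    (φ := fun τ => K * Y τ - c0 * D τ) hst.le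
    (fun τ hτ => (hEd τ (hIcc hτ)).continuousAt.continuousWithinAt)
    (fun τ hτ => (hEd τ (hIcc (Ioo_subset_Icc_self hτ))).hasDerivWithinAt)
    ((hYi'.const_mul K).sub (hDi.const_mul c0)) ?_
  swap
  · intro τ hτ
    have hτ' := hIcc (Ioo_subset_Icc_self hτ)
    obtain ⟨h, hh⟩ := hS τ hτ'
    have e : ∀ v, deriv (fun s => f s v) τ = ∑ i : Fin 3, pd i
      (fun w => (∑ j : Fin 3, coeffA (f τ) w i j * pd j (f τ) w)
        - f τ w * pd i (coeffa (f τ)) w) v := fun v => hE τ hτ' v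
    simp_rw [e]
    have a0 := h0 τ
    have a1 := h1 τ hτ'
    have a2 := hco τ hτ'
    rw [← hh] at a0 a1 a2
    have := fixed_time hp hε hk hkl hc.le h a0 a1 a2 hχ hχc hχ0 hχ1 hχd
    rw [hh] at this
    simp only [hY, hD, hK, hc0]
    unfold DD
    linarith
  have hDii : ∀ a b, s ≤ a → a ≤ b → b ≤ t → IntervalIntegrable D volume a b := fun a b ha hab hb => by
    rw [intervalIntegrable_iff_integrableOn_Icc_of_le hab]
    exact hDi.mono_set (Icc_subset_Icc ha hb)
  have hYii : IntervalIntegrable Y volume s t := by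
    rw [intervalIntegrable_iff_integrableOn_Icc_of_le hst.le]; exact hYi'
  rw [intervalIntegral.integral_sub (hYii.const_mul K) ((hDii s t le_rfl hst.le le_rfl).const_mul c0),
    intervalIntegral.integral_const_mul, intervalIntegral.integral_const_mul] at key
  have b1 : ∫ τ in s..t, Y τ ≤ A := by
    rw [intervalIntegral.integral_of_le hst.le]
    exact hmono _ (Ioc_subset_Icc_self.trans hIcc')
  have b2 : ∫ τ in T₂..t, D τ ≤ ∫ τ in s..t, D τ := by
    rw [← intervalIntegral.integral_add_adjacent_intervals (hDii s T₂ le_rfl hs.2.le ht.1.le)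
      (hDii T₂ t hs.2.le ht.1.le le_rfl)]
    have := intervalIntegral.integral_nonneg (μ := volume) hs.2.le fun τ _ => hD0 τ
    linarith
  have b3 : E s ≤ (l - k)⁻¹ * Y s := by
    obtain ⟨h, hh⟩ := hS s (hIcc ⟨le_rfl, hst.le⟩)
    simp only [hEdef, hY]
    rw [← integral_const_mul, ← hh]
    have hxi := (xr_int h hk (show 0 < p + 1 by linarith)).const_mul (l - k)⁻¹
    refine integral_mono_of_nonneg (ae_of_all _ fun v => mul_nonneg (be_nonneg hp hε l _) (sq_nonneg _)) hxi
      (ae_of_all _ fun v => ?_)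
    refine (mul_le_of_le_one_right (be_nonneg hp hε l _) (pow_le_one₀ (hχ0 v) (hχ1 v))).trans ?_
    exact (be_le hp hε l _).trans (xp_le hp hkl)
  have b4 : E s ≤ 1 / ((T₂ - T₁) * (l - k)) * A := by
    refine b3.trans ?_
    calc (l - k)⁻¹ * Y s ≤ (l - k)⁻¹ * ((T₂ - T₁)⁻¹ * A) := by gcongr
      _ = _ := by field_simp
  have b5 := mul_le_mul_of_nonneg_left b1 hK0
  have b6 := mul_le_mul_of_nonneg_left b2 hc0p.le
  linarith


lemma fatou_le {α : Type*} [MeasurableSpace α] {μ : Measure α} {F : ℕ → α → ENNReal} {G : α → ENNReal} {K : ENNReal}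
    (hm : ∀ n, AEMeasurable (F n) μ) (hl : ∀ᵐ x ∂μ, G x ≤ liminf (fun n => F n x) atTop)
    (hK : ∀ᶠ n in atTop, ∫⁻ x, F n x ∂μ ≤ K) : ∫⁻ x, G x ∂μ ≤ K :=
  (lintegral_mono_ae hl).trans ((lintegral_liminf_le' hm).trans (liminf_le_of_frequently_le' hK.frequently))

lemma ratio_tendsto {x q : ℝ} (hx : 0 < x) : Tendsto (fun n : ℕ => x ^ (q + 1) / (x + 1 / ((n : ℝ) + 1))) atTop (nhds (x ^ q)) := by
  have h1 : Tendsto (fun n : ℕ => x ^ (q + 1) / (x + 1 / ((n : ℝ) + 1))) atTop (nhds (x ^ (q + 1) / (x + 0))) :=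
    tendsto_const_nhds.div (tendsto_const_nhds.add tendsto_one_div_add_atTop_nhds_zero_nat) (by simpa using hx.ne')
  have h2 : x ^ (q + 1) / (x + 0) = x ^ q := by
    rw [add_zero, Real.rpow_add_one hx.ne', mul_div_cancel_right₀ _ hx.ne']
  rwa [h2] at h1

lemma chi_ev {χ : ℕ → V3 → ℝ} (h : ∀ n : ℕ, ∀ v : V3, ‖v‖ ≤ n + 1 → χ n v = 1) (v : V3) :
    ∀ᶠ n in atTop, χ n v = 1 := by
  obtain ⟨N, hN⟩ := exists_nat_ge ‖v‖
  filter_upwards [eventually_ge_atTop N] with n hn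
  refine h n v ?_
  have : (N : ℝ) ≤ n := by exact_mod_cast hn
  linarith

lemma be_tendsto {p l : ℝ} (hp : 3 / 2 < p) {χ : ℕ → V3 → ℝ} (h : ∀ n : ℕ, ∀ v : V3, ‖v‖ ≤ n + 1 → χ n v = 1)
    (s : ℝ) (v : V3) :
    Tendsto (fun n : ℕ => be p (1 / ((n : ℝ) + 1)) l s * χ n v ^ 2) atTop (nhds (max (s - l) 0 ^ p)) := by
  have key : Tendsto (fun n : ℕ => be p (1 / ((n : ℝ) + 1)) l s) atTop (nhds (max (s - l) 0 ^ p)) := by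
    unfold be
    rcases (le_max_right (s - l) 0).eq_or_lt with h0 | h0
    · rw [← h0, Real.zero_rpow (by linarith), Real.zero_rpow (by linarith)]
      simp
    · exact ratio_tendsto h0
  refine key.congr' ?_
  filter_upwards [chi_ev h v] with n hn
  rw [hn]; ring

lemma pd_pow {p l : ℝ} (hp : 3 / 2 < p) {g : V3 → ℝ} (hg : Differentiable ℝ g) (v : V3) (i : Fin 3) :
    (g v ≤ l → pd i (fun w => max (g w - l) 0 ^ (p / 2)) v = 0) ∧
    (l < g v → pd i (fun w => max (g w - l) 0 ^ (p / 2)) v = p / 2 * (g v - l) ^ (p / 2 - 1) * pd i g v) := by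
  constructor
  · intro h
    have : IsLocalMin (fun w => max (g w - l) 0 ^ (p / 2)) v := by
      refine Eventually.of_forall fun w => ?_
      simp only
      rw [max_eq_right (by linarith : g v - l ≤ 0), Real.zero_rpow (by linarith)]
      exact Real.rpow_nonneg (le_max_right _ _) _
    simp [pd, this.fderiv_eq_zero]
  · intro h
    have e : (fun w => max (g w - l) 0 ^ (p / 2)) =ᶠ[nhds v] fun w => (g w - l) ^ (p / 2) := by
      filter_upwards [hg.continuous.continuousAt.eventually (lt_mem_nhds h)] with w hw
      rw [max_eq_left (by linarith)]
    unfold pd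
    rw [e.fderiv_eq]
    have h1 : HasFDerivAt (fun w => g w - l) (fderiv ℝ g v) v := (hg v).hasFDerivAt.sub_const l
    have h2 := h1.rpow_const (p := p / 2) (Or.inl (by linarith : g v - l ≠ 0))
    rw [h2.fderiv]
    simp

lemma diss_tendsto {p l : ℝ} (hp : 3 / 2 < p) {χ : ℕ → V3 → ℝ} (h : ∀ n : ℕ, ∀ v : V3, ‖v‖ ≤ n + 1 → χ n v = 1)
    {g : V3 → ℝ} (hg : Differentiable ℝ g) (v : V3) :
    Tendsto (fun n : ℕ => p ^ 2 / 4 * DD p (1 / ((n : ℝ) + 1)) l (χ n) g v) atTop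
      (nhds (jap v ^ (-(3 : ℝ)) * ∑ i : Fin 3, (pd i (fun w => max (g w - l) 0 ^ (p / 2)) v) ^ 2)) := by
  rcases le_or_gt (g v) l with hv | hv
  · have e1 : ∀ n : ℕ, DD p (1 / ((n : ℝ) + 1)) l (χ n) g v = 0 := by
      intro n
      unfold DD
      rw [max_eq_right (by linarith : g v - l ≤ 0), Real.zero_rpow (by linarith)]
      simp
    simp only [e1]
    simp [(pd_pow hp hg v _).1 hv]
  · have hx : 0 < g v - l := by linarith
    have e2 : jap v ^ (-(3 : ℝ)) * ∑ i : Fin 3, (pd i (fun w => max (g w - l) 0 ^ (p / 2)) v) ^ 2 =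
        p ^ 2 / 4 * ((g v - l) ^ (p - 2) * (jap v ^ (-(3 : ℝ)) * ∑ i, pd i g v ^ 2)) := by
      have e3 : ((g v - l) ^ (p / 2 - 1)) ^ 2 = (g v - l) ^ (p - 2) := by
        rw [← Real.rpow_natCast, ← Real.rpow_mul hx.le]; congr 1; push_cast; ring
      simp_rw [(pd_pow hp hg v _).2 hv, mul_pow, e3, ← Finset.mul_sum]
      ring
    rw [e2]
    refine Tendsto.const_mul _ ?_
    have e4 : Tendsto (fun n : ℕ => (g v - l) ^ (p - 1) / (g v - l + 1 / ((n : ℝ) + 1)) *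
        (jap v ^ (-(3 : ℝ)) * ∑ i, pd i g v ^ 2)) atTop
        (nhds ((g v - l) ^ (p - 2) * (jap v ^ (-(3 : ℝ)) * ∑ i, pd i g v ^ 2))) := by
      refine Tendsto.mul_const _ ?_
      have := ratio_tendsto (q := p - 2) hx
      rwa [show p - 2 + 1 = p - 1 by ring] at this
    refine e4.congr' ?_
    filter_upwards [chi_ev h v] with n hn
    unfold DD
    rw [hn, max_eq_left hx.le]; ring

lemma limit_ineq {T : ℝ} {f : ℝ → V3 → ℝ}
    (hU : ContDiffOn ℝ 1 (fun q : ℝ × V3 => f q.1 q.2) (Ioo (0 : ℝ) T ×ˢ (univ : Set V3)))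
    (hD : ∀ t ∈ Ioo 0 T, Differentiable ℝ (f t))
    {p l c₀ K : ℝ} (hp : 3 / 2 < p) (hc : 0 < c₀)
    {T₂ T₃ : ℝ} (hT2 : 0 < T₂) (hT3 : T₃ ≤ T) {χ : ℕ → V3 → ℝ} (hχ : ∀ n, Continuous (χ n))
    (hχc : ∀ n, HasCompactSupport (χ n))
    (h : ∀ n : ℕ, ∀ v : V3, ‖v‖ ≤ n + 1 → χ n v = 1)
    (hK : ∀ᶠ n : ℕ in atTop, ∀ t ∈ Ioo T₂ T₃, (∫ v, be p (1 / ((n : ℝ) + 1)) l (f t v) * χ n v ^ 2) +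
      c₀ * ∫ τ in T₂..t, ∫ v, DD p (1 / ((n : ℝ) + 1)) l (χ n) (f τ) v ≤ K) :
    (⨆ t ∈ Set.Ioo T₂ T₃,
              ∫⁻ v : V3, ENNReal.ofReal (max (f t v - l) 0 ^ p)) +
            (∫⁻ t in Set.Ioo T₂ T₃, ∫⁻ v : V3, ENNReal.ofReal
              (jap v ^ (-(3 : ℝ)) * ∑ i : Fin 3,
                (pd i (fun w => max (f t w - l) 0 ^ (p / 2)) v) ^ 2)) ≤
      ENNReal.ofReal K + ENNReal.ofReal (p ^ 2 / 4 * (K / c₀)) := by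
  have hε : ∀ n : ℕ, 0 < 1 / ((n : ℝ) + 1) := fun n => by positivity
  have hsub : ∀ t ∈ Ioo T₂ T₃, t ∈ Ioo 0 T := fun t ht => ⟨hT2.trans ht.1, ht.2.trans_le hT3⟩
  have hb0 : ∀ (n : ℕ) t, 0 ≤ ∫ v, be p (1 / ((n : ℝ) + 1)) l (f t v) * χ n v ^ 2 := fun n t =>
    integral_nonneg fun v => mul_nonneg (be_nonneg hp (hε n) _ _) (sq_nonneg _)
  have hd0 : ∀ (n : ℕ) t, 0 ≤ ∫ v, DD p (1 / ((n : ℝ) + 1)) l (χ n) (f t) v := fun n t =>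
    integral_nonneg fun v => DD_nonneg (hε n) _ _ _
  refine add_le_add (iSup₂_le fun t ht => ?_) ?_
  · have hft : Continuous (f t) := (hD t (hsub t ht)).continuous
    have hbc : ∀ n : ℕ, Continuous fun v => be p (1 / ((n : ℝ) + 1)) l (f t v) * χ n v ^ 2 := fun n => by
      have : Continuous (be p (1 / ((n : ℝ) + 1)) l) :=
        continuous_iff_continuousAt.2 fun s => (be_hasDeriv hp (hε n) l s).continuousAt
      exact (this.comp hft).mul ((hχ n).pow 2)
    refine fatou_le (F := fun n v => ENNReal.ofReal (be p (1 / ((n : ℝ) + 1)) l (f t v) * χ n v ^ 2))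
      (fun n => (hbc n).measurable.ennreal_ofReal.aemeasurable) ?_ ?_
    · refine Eventually.of_forall fun v => ?_
      exact (ENNReal.tendsto_ofReal (be_tendsto hp h (f t v) v)).liminf_eq.ge
    · filter_upwards [hK] with n hn
      have hi : Integrable fun v => be p (1 / ((n : ℝ) + 1)) l (f t v) * χ n v ^ 2 := by
        refine (hbc n).integrable_of_hasCompactSupport (HasCompactSupport.intro (hχc n) fun v hv => ?_)
        simp [image_eq_zero_of_notMem_tsupport hv]
      rw [← ofReal_integral_eq_lintegral_ofReal hi (Eventually.of_forall fun v =>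
        mul_nonneg (be_nonneg hp (hε n) _ _) (sq_nonneg _))]
      refine ENNReal.ofReal_le_ofReal ?_
      have h1 := hn t ht
      have h2 : 0 ≤ ∫ τ in T₂..t, ∫ v, DD p (1 / ((n : ℝ) + 1)) l (χ n) (f τ) v :=
        intervalIntegral.integral_nonneg ht.1.le fun τ _ => hd0 n τ
      have := mul_nonneg hc.le h2
      linarith
  · have main : ∀ t ∈ Ioo T₂ T₃, (∫⁻ t in Set.Ioo T₂ t, ∫⁻ v : V3, ENNReal.ofReal
              (jap v ^ (-(3 : ℝ)) * ∑ i : Fin 3,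
                (pd i (fun w => max (f t w - l) 0 ^ (p / 2)) v) ^ 2)) ≤ ENNReal.ofReal (p ^ 2 / 4 * (K / c₀)) := by
      intro t ht
      have hs2 : Icc T₂ t ⊆ Ioo 0 T := fun τ hτ => ⟨hT2.trans_le hτ.1, (hτ.2.trans_lt ht.2).trans_le hT3⟩
      have hcn : ∀ n : ℕ, ContinuousOn (fun τ => p ^ 2 / 4 * ∫ v, DD p (1 / ((n : ℝ) + 1)) l (χ n) (f τ) v) (Icc T₂ t) :=
        fun n => continuousOn_const.mul ((DDint_cont hU hp (hε n) (hχ n) (hχc n)).mono hs2)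
      refine fatou_le (F := fun n τ => ENNReal.ofReal (p ^ 2 / 4 * ∫ v, DD p (1 / ((n : ℝ) + 1)) l (χ n) (f τ) v))
        (fun n => ((hcn n).mono Ioo_subset_Icc_self |>.aemeasurable measurableSet_Ioo).ennreal_ofReal) ?_ ?_
      · filter_upwards [ae_restrict_mem measurableSet_Ioo] with τ hτ
        have hτ' := hs2 (Ioo_subset_Icc_self hτ)
        have e : ∀ n : ℕ, ENNReal.ofReal (p ^ 2 / 4 * ∫ v, DD p (1 / ((n : ℝ) + 1)) l (χ n) (f τ) v) =
            ∫⁻ v, ENNReal.ofReal (p ^ 2 / 4 * DD p (1 / ((n : ℝ) + 1)) l (χ n) (f τ) v) := by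
          intro n
          rw [← integral_const_mul, ofReal_integral_eq_lintegral_ofReal
            ((DD_int hU hp (hε n) (hχ n) (hχc n) hτ').const_mul _)
            (Eventually.of_forall fun v => mul_nonneg (by positivity) (DD_nonneg (hε n) _ _ _))]
        simp_rw [e]
        refine le_trans (lintegral_mono fun v => ?_) (lintegral_liminf_le' fun n =>
          ((DD_int hU hp (hε n) (hχ n) (hχc n) hτ').const_mul _).aemeasurable.ennreal_ofReal)
        exact (ENNReal.tendsto_ofReal (diss_tendsto hp h (hD τ hτ') v)).liminf_eq.ge
      · filter_upwards [hK] with n hn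
        have hi : IntegrableOn (fun τ => p ^ 2 / 4 * ∫ v, DD p (1 / ((n : ℝ) + 1)) l (χ n) (f τ) v) (Ioo T₂ t) :=
          (hcn n).integrableOn_Icc.mono_set Ioo_subset_Icc_self
        rw [← ofReal_integral_eq_lintegral_ofReal hi (Eventually.of_forall fun v =>
          mul_nonneg (by positivity) (hd0 n v)), integral_const_mul]
        refine ENNReal.ofReal_le_ofReal (mul_le_mul_of_nonneg_left ?_ (by positivity))
        rw [← integral_Ioc_eq_integral_Ioo, ← intervalIntegral.integral_of_le ht.1.le, le_div_iff₀ hc]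
        have := hn t ht
        have := hb0 n t
        linarith
    rcases le_or_gt T₃ T₂ with h32 | h32
    · simp [Ioo_eq_empty_of_le h32]
    obtain ⟨u, hum, hu, hul⟩ := exists_seq_strictMono_tendsto' h32
    have hun : Ioo T₂ T₃ = ⋃ n, Ioo T₂ (u n) := by
      ext x
      simp only [mem_iUnion, mem_Ioo]
      constructor
      · rintro ⟨h1, h2⟩
        obtain ⟨n, hn⟩ := (hul.eventually (lt_mem_nhds h2)).exists
        exact ⟨n, h1, hn⟩
      · rintro ⟨n, h1, h2⟩
        exact ⟨h1, h2.trans (hu n).2⟩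
    rw [hun, setLIntegral_iUnion_of_directed _ (Monotone.directed_le fun a b hab =>
      Ioo_subset_Ioo_right (hum.monotone hab))]
    exact iSup_le fun n => main (u n) (hu n)


/-- control of 𝓔_ℓ by 𝓐_k for smooth solutions (inequality `eq:energy2`). -/
theorem A_controls_energy (p M : ℝ) (hp : 3 / 2 < p) (hM : 0 < M) :
    ∃ C : ℝ, 0 < C ∧
      ∀ T : ℝ, 0 < T → T ≤ 1 →
      ∀ f : ℝ → V3 → ℝ,
        (∀ t v, 0 ≤ f t v) →
        ContDiffOn ℝ (⊤ : ℕ∞) (fun q : ℝ × V3 => f q.1 q.2)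
          (Set.Icc 0 T ×ˢ (Set.univ : Set V3)) →
        (∀ t ∈ Set.Icc (0 : ℝ) T, IsSchwartz (f t)) →
        (∀ t ∈ Set.Ioo (0 : ℝ) T, ∀ v, LandauEqAt f t v) →
        (∀ t ∈ Set.Icc (0 : ℝ) T, IsNormalized (f t)) →
        (∀ t ∈ Set.Icc (0 : ℝ) T,
          (∫ v : V3, f t v * Real.log (f t v)) ≤ M) →
        ∀ T₁ T₂ T₃ : ℝ, 0 ≤ T₁ → T₁ < T₂ → T₂ ≤ T₃ → T₃ ≤ T →
        ∀ k l : ℝ, 0 < k → k < l →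
          (⨆ t ∈ Set.Ioo T₂ T₃,
              ∫⁻ v : V3, ENNReal.ofReal (max (f t v - l) 0 ^ p)) +
            (∫⁻ t in Set.Ioo T₂ T₃, ∫⁻ v : V3, ENNReal.ofReal
              (jap v ^ (-(3 : ℝ)) * ∑ i : Fin 3,
                (pd i (fun w => max (f t w - l) 0 ^ (p / 2)) v) ^ 2)) ≤
          ENNReal.ofReal (C * (1 / ((T₂ - T₁) * (l - k)) + 1 + l / (l - k) +
              l ^ 2 / (l - k) ^ 2)) *
            (∫⁻ t in Set.Ioo T₁ T₃, ∫⁻ v : V3,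
              ENNReal.ofReal (max (f t v - k) 0 ^ (p + 1))) := by
  obtain ⟨c, hc, hco⟩ := coercive M hM
  have hp0 : 0 < p := by linarith
  have hp1 : 0 < p - 1 := by linarith
  have hc₀ : 0 < c / 2 * (p * (p - 1)) := by positivity
  set c₀ : ℝ := c / 2 * (p * (p - 1)) with hc₀d
  refine ⟨(2 * p + 3) * (1 + p ^ 2 / 4 / c₀), by positivity, ?_⟩
  intro T hT _ f h0 hf hS hE hN hM' T₁ T₂ T₃ hT1 hT12 hT23 hT3 k l hk hkl
  have hlk : 0 < l - k := by linarith
  have hl : 0 < l := by linarith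
  have hT21 : 0 < T₂ - T₁ := by linarith
  set B : ℝ := 1 / ((T₂ - T₁) * (l - k)) + 1 + l / (l - k) + l ^ 2 / (l - k) ^ 2 with hB
  have hB0 : 0 < B := by positivity
  by_cases hA : (∫⁻ t in Ioo T₁ T₃, ∫⁻ v : V3, ENNReal.ofReal (max (f t v - k) 0 ^ (p + 1))) = ⊤
  · rw [hA, ENNReal.mul_top]
    · exact le_top
    · rw [Ne, ENNReal.ofReal_eq_zero, not_le]; positivity
  have hsub : ∀ t ∈ Ioo 0 T, t ∈ Icc 0 T := fun t ht => Ioo_subset_Icc_self ht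
  have hU : ContDiffOn ℝ 1 (fun q : ℝ × V3 => f q.1 q.2) (Ioo (0 : ℝ) T ×ˢ (univ : Set V3)) :=
    (hf.mono (prod_mono Ioo_subset_Icc_self le_rfl)).of_le (by exact_mod_cast le_top)
  have hD : ∀ t ∈ Ioo 0 T, Differentiable ℝ (f t) := by
    intro t ht
    obtain ⟨h, hh⟩ := hS t (hsub t ht)
    rw [← hh]; exact h.differentiable
  have hco' : ∀ t ∈ Ioo 0 T, ∀ v ξ : V3, c * jap v ^ (-(3 : ℝ)) * ‖ξ‖ ^ 2 ≤
      ∑ i, ∑ j, coeffA (f t) v i j * ξ i * ξ j := by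
    intro t ht
    have h1 := hN t (hsub t ht)
    have h2 := hM' t (hsub t ht)
    have h3 := h0 t
    obtain ⟨h, hh⟩ := hS t (hsub t ht)
    rw [← hh] at h1 h2 h3 ⊢
    exact hco h h3 h1 h2
  obtain ⟨d, hd, hcut⟩ := cutoff
  choose χ hχ hχc hχ0 hχ1 hχd hχe using hcut
  set A : ℝ := (∫⁻ t in Ioo T₁ T₃, ∫⁻ v : V3, ENNReal.ofReal (max (f t v - k) 0 ^ (p + 1))).toReal with hAd
  have hA0 : 0 ≤ A := ENNReal.toReal_nonneg
  have hev : ∀ᶠ n : ℕ in atTop, (18 * Kpp p * (d / ((n : ℝ) + 1)) ^ 2 + 6 * (d / ((n : ℝ) + 1))) * Kerr k l < 1 := by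
    have t1 : Tendsto (fun n : ℕ => d / ((n : ℝ) + 1)) atTop (nhds 0) := by
      have := (tendsto_one_div_add_atTop_nhds_zero_nat (𝕜 := ℝ)).const_mul d
      simpa [div_eq_mul_inv] using this
    have t2 : Tendsto (fun n : ℕ => (18 * Kpp p * (d / ((n : ℝ) + 1)) ^ 2 + 6 * (d / ((n : ℝ) + 1))) * Kerr k l)
        atTop (nhds ((18 * Kpp p * 0 ^ 2 + 6 * 0) * Kerr k l)) :=
      (((t1.pow 2).const_mul _).add (t1.const_mul _)).mul_const _
    refine t2.eventually (gt_mem_nhds ?_)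
    norm_num
  have hfin := limit_ineq (K := (2 * p + 3) * B * A) hU hD (l := l) hp hc₀ (hT1.trans_lt hT12) hT3
    (fun n => (hχ n).continuous) hχc hχe (by
      filter_upwards [hev] with n hn
      intro t ht
      refine (time_ineq hU h0 (fun t ht => hS t (hsub t ht)) hE (fun t ht => (hN t (hsub t ht)).1) hc hco' hp hk hkl
        hT1 hT12 hT3 hA (by positivity : (0 : ℝ) < 1 / ((n : ℝ) + 1)) (hχ n) (hχc n) (hχ0 n) (hχ1 n) (hχd n) ht).trans ?_
      refine mul_le_mul_of_nonneg_right ?_ hA0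
      have b1 : 0 ≤ 1 / ((T₂ - T₁) * (l - k)) := by positivity
      have b2 : 0 ≤ l / (l - k) := by positivity
      have b3 : 0 ≤ l ^ 2 / (l - k) ^ 2 := by positivity
      rw [hB]
      nlinarith [mul_nonneg hp0.le b1, mul_nonneg hp0.le b2, mul_nonneg hp0.le b3])
  refine hfin.trans ?_
  rw [← ENNReal.ofReal_toReal hA, ← hAd, ← ENNReal.ofReal_mul (by positivity),
    ← ENNReal.ofReal_add (by positivity) (by positivity)]
  refine ENNReal.ofReal_le_ofReal (le_of_eq ?_)
  field_simp

end
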